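/- Degree-4 modular differential equation for the generator φ_{0,3}: with all heat operators taken with index m = 3, the weak Jacobi form φ_{0,3} = (ϑ(τ,2z)/ϑ(τ,z))² satisfies H^{(3)}_{6}(H^{(3)}_{4}(H^{(3)}_{2}(H^{(3)}_{0}(φ_{0,3}))))(τ,z) − (29/2)·E₄(τ)·H^{(3)}_{2}(H^{(3)}_{0}(φ_{0,3}))(τ,z) + 22·E₆(τ)·H^{(3)}_{0}(φ_{0,3})(τ,z) − (119/16)·E₄(τ)²·φ_{0,3}(τ,z) = 0 at every point (τ,z) ∈ ℍ × ℂ with ϑ(τ,z) ≠ 0 (here E₈ = E₄²). -/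

import Mathlib

/-!
Write `D = q d/dq` and `∂ = (2πi)⁻¹ d/dz`, so that the index 3 operator is
`H_k = 12 D - ∂² - (k - 1/2) E₂`, and let `P = E₂/12 - ∂² log ϑ` (`wpP`) and
`A = (ϑ(τ,z)/∂ϑ(τ,0))⁶` (`sigA`). The proof identifies `φ_{0,3}` with `(∂P)² A` and hence, by the
Weierstrass equation `(∂P)² = 4P³ - (E₄/12) P + E₆/216`, with a cubic in `P` times `A`. Functions of
this shape, with coefficients depending on `τ`, are stable under `H_k` (`heatMod_cubicA`), so the
claim becomes an identity between five explicit cubics whose coefficients are polynomials in `E₄`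
and `E₆` (`Q0`, …, `Q4`).

*Weierstrass theory from theta series.* Sorting the double series of `ϑ(x+y) ϑ(x-y)` by parity shows
that it is `a(x) b(y) - b(x) a(y)` for some `a`, `b` (`th_mul_th`). Such a form satisfies a
three-term relation, which yields the addition formula (`addition_formula`). Setting `y = x` gives
the duplication formula (`th_two_mul`), hence `φ_{0,3} = (∂P)² A`; expanding at `y = 0` to orders 4
and 6 gives the equations for `∂²P` and `(∂P)²`, with coefficients in the theta constants
`∂ᵏϑ(τ,0)`. The heat equation `2 Dϑ = ∂²ϑ` then gives `DP` and `DA`.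

*Modular input.* Since there are no nonzero level one cusp forms of weight below 12, Ramanujan's
formulas for `DE₂`, `DE₄`, `DE₆` follow from transformation laws and values at the cusp. The eighth
power of `∂ϑ(τ,0)` is a cusp form of weight 12, hence a nonzero multiple of `Δ = η²⁴`
(`th_one_pow_eq`); so `∂ϑ(τ,0)` never vanishes and its logarithmic derivative is `E₂/8`, which with
Ramanujan's formulas expresses all needed theta constants through `E₂`, `E₄`, `E₆`.
-/

open Complex Real

noncomputable section

/-- The Jacobi theta series `ϑ(τ,z) = q^{1/8} ζ^{1/2} ∑_{n∈ℤ} (−1)^n q^{n(n+1)/2} ζ^n`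
with `q = e^{2πiτ}`, `ζ = e^{2πiz}`. -/
def thetaJ (τ z : ℂ) : ℂ :=
  Complex.exp (π * I * τ / 4) * Complex.exp (π * I * z) *
    ∑' n : ℤ, (-1 : ℂ) ^ n * Complex.exp (π * I * τ * n * (n + 1)) *
      Complex.exp (2 * π * I * z * n)

/-- The Dedekind eta function `η(τ) = q^{1/24} ∏_{n≥1} (1 − q^n)`. -/
def etaD (τ : ℂ) : ℂ :=
  Complex.exp (π * I * τ / 12) * ∏' n : ℕ, (1 - Complex.exp (2 * π * I * τ * (n + 1)))

/-- The divisor power sum `σ_k(n) = ∑_{d ∣ n} d^k`. -/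
def sigmaD (k n : ℕ) : ℕ := ∑ d ∈ n.divisors, d ^ k

/-- The quasi-modular Eisenstein series `E₂`. -/
def Eis2 (τ : ℂ) : ℂ :=
  1 - 24 * ∑' n : ℕ, (sigmaD 1 (n + 1) : ℂ) * Complex.exp (2 * π * I * τ * (n + 1))

/-- The Eisenstein series `E₄`. -/
def Eis4 (τ : ℂ) : ℂ :=
  1 + 240 * ∑' n : ℕ, (sigmaD 3 (n + 1) : ℂ) * Complex.exp (2 * π * I * τ * (n + 1))

/-- The Eisenstein series `E₆`. -/
def Eis6 (τ : ℂ) : ℂ :=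
  1 - 504 * ∑' n : ℕ, (sigmaD 5 (n + 1) : ℂ) * Complex.exp (2 * π * I * τ * (n + 1))

/-- The heat operator `H^{(m)}φ = (12/(2πi)) ∂φ/∂τ + (3/(4π²m)) ∂²φ/∂z²` of index `m`. -/
def heatOp (m : ℚ) (φ : ℂ → ℂ → ℂ) (τ z : ℂ) : ℂ :=
  12 / (2 * π * I) * deriv (fun t => φ t z) τ
    + 3 / (4 * π ^ 2 * (m : ℂ)) * deriv (deriv (φ τ)) z

/-- The modular heat operator `H^{(m)}_k φ = H^{(m)}φ − ((2k−1)/2)·E₂·φ`. -/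
def heatMod (m k : ℚ) (φ : ℂ → ℂ → ℂ) (τ z : ℂ) : ℂ :=
  heatOp m φ τ z - (2 * (k : ℂ) - 1) / 2 * Eis2 τ * φ τ z

/-- The weak Jacobi form `φ_{0,3}(τ,z) = (ϑ(τ,2z)/ϑ(τ,z))²` of weight 0 and index 3. -/
def phi03 (τ z : ℂ) : ℂ := (thetaJ τ (2 * z) / thetaJ τ z) ^ 2

/-! ### The theta series and its derivatives -/

/-- The `n`-th term of the series `th k`. -/
def thTerm (k : ℕ) (n : ℤ) (τ z : ℂ) : ℂ :=
  (-1 : ℂ) ^ n * ((n : ℂ) + 1 / 2) ^ k *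
    cexp (π * I * τ * ((n : ℂ) + 1 / 2) ^ 2 + 2 * π * I * z * ((n : ℂ) + 1 / 2))

/-- The `k`-th derivative of the theta series with respect to `u = 2πiz`. -/
def th (k : ℕ) (τ z : ℂ) : ℂ := ∑' n : ℤ, thTerm k n τ z

/-- Majorant of `thTerm k n τ z` on the region `T ≤ Im τ`, `|Im z| ≤ S`. -/
def thBound (k : ℕ) (S T : ℝ) (n : ℤ) : ℝ :=
  |(n : ℝ) + 1 / 2| ^ k *
    Real.exp (-π * T * ((n : ℝ) + 1 / 2) ^ 2 + 2 * π * S * |(n : ℝ) + 1 / 2|)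

lemma thTerm_norm_le {k : ℕ} {S T : ℝ} {n : ℤ} {τ z : ℂ} (hτ : T ≤ τ.im)
    (hz : |z.im| ≤ S) : ‖thTerm k n τ z‖ ≤ thBound k S T n := by
  have h1 : ‖((n : ℂ) + 1 / 2)‖ = |(n : ℝ) + 1 / 2| := by
    have := Complex.norm_real ((n : ℝ) + 1 / 2)
    rw [Real.norm_eq_abs] at this
    rw [← this]; push_cast; rfl
  have h2 : (π * I * τ * ((n : ℂ) + 1 / 2) ^ 2 + 2 * π * I * z * ((n : ℂ) + 1 / 2)).re
      = -π * τ.im * ((n : ℝ) + 1 / 2) ^ 2 - 2 * π * (z.im * ((n : ℝ) + 1 / 2)) := by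
    have : (π * I * τ * ((n : ℂ) + 1 / 2) ^ 2 + 2 * π * I * z * ((n : ℂ) + 1 / 2))
      = ((π * ((n : ℝ) + 1 / 2) ^ 2 : ℝ) : ℂ) * (τ * I) +
        ((2 * π * ((n : ℝ) + 1 / 2) : ℝ) : ℂ) * (z * I) := by push_cast; ring
    rw [this, add_re, re_ofReal_mul, re_ofReal_mul, mul_I_re, mul_I_re]; ring
  rw [thTerm, norm_mul, norm_mul, norm_pow, h1, Complex.norm_exp, h2, norm_zpow, norm_neg,
    norm_one, one_zpow, one_mul, thBound]
  gcongr
  have h3 : -(z.im * ((n : ℝ) + 1 / 2)) ≤ S * |(n : ℝ) + 1 / 2| := by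
    calc _ ≤ |z.im * ((n : ℝ) + 1 / 2)| := neg_le_abs _
      _ = |z.im| * |(n : ℝ) + 1 / 2| := abs_mul _ _
      _ ≤ _ := by gcongr
  have h4 : T * ((n : ℝ) + 1 / 2) ^ 2 ≤ τ.im * ((n : ℝ) + 1 / 2) ^ 2 := by gcongr
  nlinarith [pi_pos]

lemma summable_thBound (k : ℕ) (S : ℝ) (hS : 0 ≤ S) {T : ℝ} (hT : 0 < T) :
    Summable (thBound k S T) := by
  have s1 := summable_pow_mul_jacobiTheta₂_term_bound (S + T / 2) hT k
  have s2 := summable_pow_mul_jacobiTheta₂_term_bound (S + T / 2) hT 0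
  refine Summable.of_nonneg_of_le (fun n => by unfold thBound; positivity) (fun n => ?_)
    (((s1.mul_left (2 ^ k)).add s2).mul_left (Real.exp (π * S)))
  have h1 : |(n : ℝ) + 1 / 2| ≤ |(n : ℝ)| + 1 / 2 := by
    refine (abs_add_le _ _).trans ?_
    rw [abs_of_pos (by norm_num : (0 : ℝ) < 1 / 2)]
  have h2 : |(n : ℝ) + 1 / 2| ^ k ≤ 2 ^ k * |(n : ℝ)| ^ k + 1 := by
    rcases eq_or_ne n 0 with rfl | hn
    · have : |((0 : ℤ) : ℝ) + 1 / 2| ^ k ≤ 1 := by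
        apply pow_le_one₀ (abs_nonneg _)
        rw [Int.cast_zero, zero_add, abs_of_pos] <;> norm_num
      exact le_add_of_nonneg_of_le (by positivity) this
    · have h3 : (1 : ℝ) ≤ |(n : ℝ)| := by exact_mod_cast Int.one_le_abs hn
      have : |(n : ℝ) + 1 / 2| ^ k ≤ (2 * |(n : ℝ)|) ^ k := by
        gcongr; linarith
      rw [mul_pow] at this; linarith
  have h3 : -π * T * ((n : ℝ) + 1 / 2) ^ 2 + 2 * π * S * |(n : ℝ) + 1 / 2| ≤
      π * S + -π * (T * n ^ 2 - 2 * (S + T / 2) * |(n : ℝ)|) := by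
    have a1 : -(n : ℝ) ≤ |(n : ℝ)| := neg_le_abs _
    have a2 : T * -(n : ℝ) ≤ T * |(n : ℝ)| := by gcongr
    have a3 : S * |(n : ℝ) + 1 / 2| ≤ S * (|(n : ℝ)| + 1 / 2) := by gcongr
    have := mul_le_mul_of_nonneg_left (show -T * ((n : ℝ) + 1 / 2) ^ 2 + 2 * S * |(n : ℝ) + 1 / 2|
      ≤ S - (T * n ^ 2 - 2 * (S + T / 2) * |(n : ℝ)|) by nlinarith) pi_pos.le
    linarith
  calc thBound k S T n ≤ (2 ^ k * |(n : ℝ)| ^ k + 1) *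
        Real.exp (π * S + -π * (T * n ^ 2 - 2 * (S + T / 2) * |(n : ℝ)|)) := by
        unfold thBound; gcongr
    _ = _ := by rw [Real.exp_add]; push_cast; ring

lemma summable_thTerm (k : ℕ) {τ : ℂ} (hτ : 0 < τ.im) (z : ℂ) :
    Summable (fun n => thTerm k n τ z) :=
  Summable.of_norm_bounded (summable_thBound k |z.im| (abs_nonneg _) hτ)
    (fun _ => thTerm_norm_le le_rfl le_rfl)

lemma summable_norm_thTerm (k : ℕ) {τ : ℂ} (hτ : 0 < τ.im) (z : ℂ) :
    Summable (fun n => ‖thTerm k n τ z‖) := (summable_thTerm k hτ z).norm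

lemma hasDerivAt_th_z (k : ℕ) {τ : ℂ} (hτ : 0 < τ.im) (z : ℂ) :
    HasDerivAt (fun w => th k τ w) (2 * π * I * th (k + 1) τ z) z := by
  have key := hasDerivAt_tsum_of_isPreconnected (𝕜 := ℂ)
    (g := fun (n : ℤ) w => thTerm k n τ w)
    (g' := fun (n : ℤ) w => 2 * π * I * thTerm (k + 1) n τ w)
    (u := fun n => 2 * π * thBound (k + 1) (|z.im| + 1) τ.im n)
    (t := Metric.ball z 1) (y₀ := z) (y := z)
    ((summable_thBound _ _ (by positivity) hτ).mul_left _) Metric.isOpen_ball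
    (convex_ball z 1).isPreconnected ?_ ?_ (Metric.mem_ball_self one_pos)
    (summable_thTerm k hτ z) (Metric.mem_ball_self one_pos)
  · simpa only [th, tsum_mul_left] using key
  · intro n w _
    have h1 : HasDerivAt (fun w : ℂ => π * I * τ * ((n : ℂ) + 1 / 2) ^ 2 +
        2 * π * I * w * ((n : ℂ) + 1 / 2)) (2 * π * I * ((n : ℂ) + 1 / 2)) w := by
      have := (((hasDerivAt_id w).const_mul (2 * π * I)).mul_const ((n : ℂ) + 1 / 2)).const_add
        (π * I * τ * ((n : ℂ) + 1 / 2) ^ 2)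
      simpa using this
    have := (h1.cexp).const_mul ((-1 : ℂ) ^ n * ((n : ℂ) + 1 / 2) ^ k)
    refine this.congr_deriv ?_
    simp only [thTerm]; ring
  · intro n w hw
    have hw' : |w.im| ≤ |z.im| + 1 := by
      have h1 : |(w - z).im| ≤ ‖w - z‖ := abs_im_le_norm _
      have h2 : ‖w - z‖ < 1 := by simpa [dist_eq_norm] using hw
      have h3 : |w.im| ≤ |(w - z).im| + |z.im| := by
        have := abs_add_le (w - z).im z.im
        simpa using this
      linarith
    rw [norm_mul]
    have : ‖(2 * π * I : ℂ)‖ = 2 * π := by simp [abs_of_pos pi_pos]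
    rw [this]
    gcongr
    exact thTerm_norm_le le_rfl hw'

lemma hasDerivAt_th_τ (k : ℕ) {τ : ℂ} (hτ : 0 < τ.im) (z : ℂ) :
    HasDerivAt (fun t => th k t z) (π * I * th (k + 2) τ z) τ := by
  have hmem : τ ∈ {t : ℂ | τ.im / 2 < t.im} := by simp [hτ]
  have key := hasDerivAt_tsum_of_isPreconnected (𝕜 := ℂ)
    (g := fun (n : ℤ) t => thTerm k n t z)
    (g' := fun (n : ℤ) t => π * I * thTerm (k + 2) n t z)
    (u := fun n => π * thBound (k + 2) |z.im| (τ.im / 2) n)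
    (t := {t : ℂ | τ.im / 2 < t.im}) (y₀ := τ) (y := τ)
    ((summable_thBound _ _ (by positivity) (by positivity)).mul_left _)
    (isOpen_lt continuous_const continuous_im)
    (convex_halfSpace_im_gt _).isPreconnected ?_ ?_ hmem
    (summable_thTerm k hτ z) hmem
  · simpa only [th, tsum_mul_left] using key
  · intro n w _
    have h1 : HasDerivAt (fun w : ℂ => π * I * w * ((n : ℂ) + 1 / 2) ^ 2 +
        2 * π * I * z * ((n : ℂ) + 1 / 2)) (π * I * ((n : ℂ) + 1 / 2) ^ 2) w := by
      have := (((hasDerivAt_id w).const_mul (π * I)).mul_const (((n : ℂ) + 1 / 2) ^ 2)).add_const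
        (2 * π * I * z * ((n : ℂ) + 1 / 2))
      simpa using this
    have := (h1.cexp).const_mul ((-1 : ℂ) ^ n * ((n : ℂ) + 1 / 2) ^ k)
    refine this.congr_deriv ?_
    simp only [thTerm]; ring
  · intro n w hw
    rw [norm_mul]
    have : ‖(π * I : ℂ)‖ = π := by simp [abs_of_pos pi_pos]
    rw [this]
    gcongr
    exact thTerm_norm_le hw.le le_rfl

lemma thetaJ_eq_th (τ z : ℂ) : thetaJ τ z = th 0 τ z := by
  rw [thetaJ, th, ← tsum_mul_left]
  refine tsum_congr fun n => ?_
  rw [thTerm, pow_zero, mul_one, ← Complex.exp_add, mul_assoc ((-1 : ℂ) ^ n), ← Complex.exp_add,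
    mul_left_comm, ← Complex.exp_add]
  congr 2
  ring

/-- Parity of the theta series and its derivatives in `z`, via the reflection `n ↦ -1 - n` of the summation index. -/
lemma th_neg (k : ℕ) (τ z : ℂ) : th k τ (-z) = (-1) ^ (k + 1) * th k τ z := by
  rw [th, th, ← tsum_mul_left, ← (Equiv.subLeft (-1 : ℤ)).tsum_eq]
  refine tsum_congr fun n => ?_
  have h1 : (((-1 - n : ℤ) : ℂ) + 1 / 2) = -((n : ℂ) + 1 / 2) := by push_cast; ring
  have h2 : (-1 : ℂ) ^ (-1 - n) = - (-1) ^ n := by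
    rw [zpow_sub₀ (by norm_num), zpow_neg_one]
    rcases Int.even_or_odd n with h | h
    · rw [h.neg_one_zpow]; norm_num
    · rw [h.neg_one_zpow]; norm_num
  simp only [thTerm, Equiv.subLeft_apply, h1, h2, neg_sq]
  rw [neg_pow ((n : ℂ) + 1 / 2) k]
  ring_nf

lemma th_even_zero (k : ℕ) (hk : Even k) (τ : ℂ) : th k τ 0 = 0 := by
  have := th_neg k τ 0
  rw [neg_zero, pow_succ, hk.neg_one_pow] at this
  linear_combination this / 2

/-! ### The addition formula -/

/-- Splits pairs of integers by the parity of their difference. -/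
def paritySplit : (ℤ × ℤ) ⊕ (ℤ × ℤ) → ℤ × ℤ
  | .inl p => (p.1 + p.2, p.1 - p.2)
  | .inr p => (p.1 + p.2, p.1 - p.2 - 1)

lemma paritySplit_bijective : Function.Bijective paritySplit := by
  constructor
  · rintro (⟨a, b⟩ | ⟨a, b⟩) (⟨c, d⟩ | ⟨c, d⟩) h <;>
      simp only [paritySplit, Prod.mk.injEq, Sum.inl.injEq, Sum.inr.injEq, reduceCtorEq] at h ⊢ <;>
      omega
  · rintro ⟨m, n⟩
    rcases Int.even_or_odd' (m - n) with ⟨j, h | h⟩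
    · exact ⟨.inl (n + j, j), by simp only [paritySplit, Prod.mk.injEq]; omega⟩
    · exact ⟨.inr (n + j + 1, j), by simp only [paritySplit, Prod.mk.injEq]; omega⟩

/-- `θ(x+y)θ(x-y)` is an alternating form of rank two in the odd and even parts of
`∑ q^{s²/4} ζ^s`, because `(m+½) + (n+½)` and `m - n` have opposite parities. -/
lemma th_mul_th (τ : ℂ) (hτ : 0 < τ.im) : ∃ a b : ℂ → ℂ, ∀ x y,
    th 0 τ (x + y) * th 0 τ (x - y) = a x * b y - b x * a y := by
  let e : ℤ → ℂ → ℂ := fun s x => jacobiTheta₂_term s x (τ / 2)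
  have hs : ∀ x, Summable fun s => ‖e s x‖ := fun x =>
    ((summable_jacobiTheta₂_term_iff x (τ / 2)).mpr (by simpa using hτ)).norm
  have ho : ∀ x, Summable fun i : ℤ => ‖e (2 * i + 1) x‖ := fun x =>
    (hs x).comp_injective (i := fun i : ℤ => 2 * i + 1) (fun i j h => by
      simp only at h; omega)
  have he : ∀ x, Summable fun i : ℤ => ‖e (2 * i) x‖ := fun x =>
    (hs x).comp_injective (i := fun i : ℤ => 2 * i) (fun i j h => by simp only at h; omega)
  refine ⟨fun x => ∑' i : ℤ, e (2 * i + 1) x, fun x => ∑' i : ℤ, e (2 * i) x, fun x y => ?_⟩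
  have hx := summable_norm_thTerm 0 hτ (x + y)
  have hy := summable_norm_thTerm 0 hτ (x - y)
  rw [th, th, tsum_mul_tsum_of_summable_norm hx hy,
    tsum_mul_tsum_of_summable_norm (ho x) (he y), tsum_mul_tsum_of_summable_norm (he x) (ho y),
    ← (Equiv.ofBijective _ paritySplit_bijective).tsum_eq]
  refine HasSum.tsum_eq ?_
  rw [sub_eq_add_neg (∑' z : ℤ × ℤ, e (2 * z.1 + 1) x * e (2 * z.2) y)]
  apply HasSum.sum
  · convert! (summable_mul_of_summable_norm (ho x) (he y)).hasSum using 1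
    ext ⟨i, j⟩
    simp only [Function.comp, Equiv.ofBijective_apply, paritySplit, thTerm, e, jacobiTheta₂_term,
      pow_zero, mul_one]
    have h1 : (-1 : ℂ) ^ (i + j) * (-1) ^ (i - j) = 1 := by
      rw [← zpow_add₀ (by norm_num), show i + j + (i - j) = 2 * i by ring, zpow_mul]; norm_num
    rw [mul_mul_mul_comm, h1, one_mul, ← Complex.exp_add, ← Complex.exp_add]
    congr 1; push_cast; ring
  · convert! (summable_mul_of_summable_norm (he x) (ho y)).hasSum.neg using 1
    ext ⟨i, j⟩
    simp only [Function.comp, Equiv.ofBijective_apply, paritySplit, thTerm, e, jacobiTheta₂_term,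
      pow_zero, mul_one]
    have h1 : (-1 : ℂ) ^ (i + j) * (-1) ^ (i - j - 1) = -1 := by
      rw [← zpow_add₀ (by norm_num), show i + j + (i - j - 1) = 2 * i + (-1) by ring,
        zpow_add₀ (by norm_num), zpow_mul]; norm_num
    rw [mul_mul_mul_comm, h1, neg_one_mul, ← Complex.exp_add, ← Complex.exp_add]
    congr 2; push_cast; ring

/-- A sequence of functions on `ℂ`, each the derivative of the previous one with respect to
`u = 2πiz`. -/
def IsTower (f : ℕ → ℂ → ℂ) : Prop :=
  ∀ k y, HasDerivAt (f k) (2 * π * I * f (k + 1) y) y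

/-- The Leibniz product of two towers. -/
def towerMul (f g : ℕ → ℂ → ℂ) (n : ℕ) (y : ℂ) : ℂ :=
  ∑ ij ∈ Finset.HasAntidiagonal.antidiagonal n, (n.choose ij.1 : ℂ) * (f ij.1 y * g ij.2 y)

lemma towerMul_eq (f g : ℕ → ℂ → ℂ) (n : ℕ) (y : ℂ) :
    towerMul f g n y = ∑ i ∈ Finset.range (n + 1), (n.choose i : ℂ) * (f i y * g (n - i) y) :=
  Finset.Nat.sum_antidiagonal_eq_sum_range_succ
    (fun i j => (n.choose i : ℂ) * (f i y * g j y)) n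

lemma two_pi_I_ne : (2 * π * I : ℂ) ≠ 0 := by simp [pi_ne_zero, I_ne_zero]

lemma IsTower.eq {f g : ℕ → ℂ → ℂ} (hf : IsTower f) (hg : IsTower g) (h : f 0 = g 0) :
    ∀ k, f k = g k := by
  intro k
  induction k with
  | zero => exact h
  | succ k ih =>
    ext y
    have h1 := hf k y
    rw [ih] at h1
    exact mul_left_cancel₀ two_pi_I_ne (h1.unique (hg k y))

lemma IsTower.mul {f g : ℕ → ℂ → ℂ} (hf : IsTower f) (hg : IsTower g) :
    IsTower (towerMul f g) := by
  intro n y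
  have h : HasDerivAt (fun y => ∑ ij ∈ Finset.HasAntidiagonal.antidiagonal n,
      (n.choose ij.1 : ℂ) * (f ij.1 y * g ij.2 y)) _ y :=
    HasDerivAt.fun_sum fun ij _ => ((hf ij.1 y).mul (hg ij.2 y)).const_mul _
  refine h.congr_deriv ?_
  rw [towerMul, Finset.sum_antidiagonal_choose_succ_mul (fun i j => f i y * g j y) n,
    ← Finset.sum_add_distrib, Finset.mul_sum]
  refine Finset.sum_congr rfl fun ij hij => ?_
  rw [Nat.choose_symm_of_eq_add (Finset.HasAntidiagonal.mem_antidiagonal.mp hij).symm]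
  ring

lemma IsTower.sub {f g : ℕ → ℂ → ℂ} (hf : IsTower f) (hg : IsTower g) :
    IsTower (fun k y => f k y - g k y) := fun k y =>
  ((hf k y).sub (hg k y)).congr_deriv (by ring)

lemma IsTower.const_mul {f : ℕ → ℂ → ℂ} (hf : IsTower f) (c : ℂ) :
    IsTower (fun k y => c * f k y) := fun k y =>
  ((hf k y).const_mul c).congr_deriv (by ring)

lemma IsTower.shift {f : ℕ → ℂ → ℂ} (hf : IsTower f) (n : ℕ) :
    IsTower (fun k y => f (k + n) y) := fun k y => by
  have := hf (k + n) y
  rwa [Nat.add_right_comm] at this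

lemma IsTower.comp_add {f : ℕ → ℂ → ℂ} (hf : IsTower f) (x : ℂ) :
    IsTower (fun k y => f k (x + y)) := fun k y =>
  (hf k (x + y)).comp_const_add x y

lemma IsTower.comp_sub {f : ℕ → ℂ → ℂ} (hf : IsTower f) (x : ℂ) :
    IsTower (fun k y => (-1) ^ k * f k (x - y)) := fun k y =>
  (((hf k (x - y)).comp_const_sub x y).const_mul ((-1) ^ k)).congr_deriv (by ring)

lemma isTower_th {τ : ℂ} (hτ : 0 < τ.im) : IsTower (fun k => th k τ) :=
  fun k y => hasDerivAt_th_z k hτ y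

/-- `y ↦ θ(x+y)θ(x-y)` and its derivatives. -/
def towF (τ x : ℂ) : ℕ → ℂ → ℂ :=
  towerMul (fun k y => th k τ (x + y)) (fun k y => (-1) ^ k * th k τ (x - y))

/-- `θ²` and its derivatives. -/
def towSq (τ : ℂ) : ℕ → ℂ → ℂ := towerMul (fun k => th k τ) (fun k => th k τ)

/-- `W = θθ'' - θ'²` and its derivatives. -/
def towW (τ : ℂ) : ℕ → ℂ → ℂ := fun k y =>
  towerMul (fun k => th k τ) (fun k => th (k + 2) τ) k y -
    towerMul (fun k => th (k + 1) τ) (fun k => th (k + 1) τ) k y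

lemma isTower_towF {τ : ℂ} (hτ : 0 < τ.im) (x : ℂ) : IsTower (towF τ x) :=
  ((isTower_th hτ).comp_add x).mul ((isTower_th hτ).comp_sub x)

lemma isTower_towSq {τ : ℂ} (hτ : 0 < τ.im) : IsTower (towSq τ) :=
  (isTower_th hτ).mul (isTower_th hτ)

lemma isTower_towW {τ : ℂ} (hτ : 0 < τ.im) : IsTower (towW τ) :=
  ((isTower_th hτ).mul ((isTower_th hτ).shift 2)).sub
    (((isTower_th hτ).shift 1).mul ((isTower_th hτ).shift 1))

/-- The addition formula
`θ'(0)² θ(x+y)θ(x-y) = W(x)θ(y)² - θ(x)²W(y)`, with all its derivatives in `y`. It is the second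
derivative at `u = 0` of the three-term relation
`F(x,y)F(u,0) = F(x,u)F(y,0) - F(x,0)F(y,u)` for `F(x,y) = θ(x+y)θ(x-y)`. -/
lemma addition_formula {τ : ℂ} (hτ : 0 < τ.im) (x : ℂ) (k : ℕ) (y : ℂ) :
    th 1 τ 0 ^ 2 * towF τ x k y =
      towW τ 0 x * towSq τ k y - th 0 τ x ^ 2 * towW τ k y := by
  obtain ⟨a, b, hab⟩ := th_mul_th τ hτ
  have hF0 : ∀ x y, towF τ x 0 y = a x * b y - b x * a y := fun x y => by
    simp [towF, towerMul, ← hab]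
  have hS0 : ∀ u, towSq τ 0 u = a u * b 0 - b u * a 0 := fun u => by
    simp [towSq, towerMul, ← hab]
  have hz0 : th 0 τ 0 = 0 := th_even_zero 0 (by decide) τ
  have hz2 : th 2 τ 0 = 0 := th_even_zero 2 (by decide) τ
  have hF2 : ∀ x, towF τ x 2 0 = 2 * towW τ 0 x := fun x => by
    simp [towF, towW, towerMul_eq, Finset.sum_range_succ, Nat.choose]
    ring
  have hS2 : towSq τ 2 0 = 2 * th 1 τ 0 ^ 2 := by
    simp [towSq, towerMul_eq, Finset.sum_range_succ, Nat.choose, hz0, hz2]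
    ring
  have key : ∀ y, th 1 τ 0 ^ 2 * towF τ x 0 y =
      towW τ 0 x * towSq τ 0 y - th 0 τ x ^ 2 * towW τ 0 y := fun y => by
    have h := ((isTower_towSq hτ).const_mul (towF τ x 0 y)).eq
      (((isTower_towF hτ x).const_mul (towSq τ 0 y)).sub
        ((isTower_towF hτ y).const_mul (towSq τ 0 x))) (by
          ext u; simp only [hF0, hS0]; ring) 2
    have h' := congrFun h 0
    simp only [hS2, hF2] at h'
    have hx : towSq τ 0 x = th 0 τ x ^ 2 := by simp [towSq, towerMul, sq]
    rw [hx] at h'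
    linear_combination h' / 2
  exact congrFun (((isTower_towF hτ x).const_mul (th 1 τ 0 ^ 2)).eq
    (((isTower_towSq hτ).const_mul (towW τ 0 x)).sub
      ((isTower_towW hτ).const_mul (th 0 τ x ^ 2))) (funext key) k) y

/-- The duplication formula for `θ`. -/
lemma th_two_mul {τ : ℂ} (hτ : 0 < τ.im) (x : ℂ) :
    th 1 τ 0 ^ 3 * th 0 τ (2 * x) =
      th 0 τ x ^ 2 * (th 0 τ x * th 3 τ x - th 1 τ x * th 2 τ x) -
        2 * (th 0 τ x * th 2 τ x - th 1 τ x ^ 2) * th 0 τ x * th 1 τ x := by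
  have h := addition_formula hτ x 1 x
  have hz0 : th 0 τ 0 = 0 := th_even_zero 0 (by decide) τ
  simp [towF, towW, towSq, towerMul_eq, Finset.sum_range_succ, Nat.choose, hz0] at h
  rw [← two_mul] at h
  linear_combination -h

/-- The addition formula to fourth order in `y`. -/
lemma bilinear_four {τ : ℂ} (hτ : 0 < τ.im) (x : ℂ) :
    th 1 τ 0 ^ 2 * (th 0 τ x * th 4 τ x - 4 * th 1 τ x * th 3 τ x + 3 * th 2 τ x ^ 2) =
      (th 0 τ x * th 2 τ x - th 1 τ x ^ 2) * (4 * th 1 τ 0 * th 3 τ 0) -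
        th 0 τ x ^ 2 * (th 1 τ 0 * th 5 τ 0 - th 3 τ 0 ^ 2) := by
  have h := addition_formula hτ x 4 0
  have hz : ∀ k, Even k → th k τ 0 = 0 := fun k hk => th_even_zero k hk τ
  simp [towF, towW, towSq, towerMul_eq, Finset.sum_range_succ, Nat.choose, hz 0 (by decide),
      hz 2 (by decide), hz 4 (by decide)] at h
  linear_combination h / 2

/-- The addition formula to sixth order in `y`. -/
lemma bilinear_six {τ : ℂ} (hτ : 0 < τ.im) (x : ℂ) :
    th 1 τ 0 ^ 2 * (th 0 τ x * th 6 τ x - 6 * th 1 τ x * th 5 τ x + 15 * th 2 τ x * th 4 τ x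
        - 10 * th 3 τ x ^ 2) =
      (th 0 τ x * th 2 τ x - th 1 τ x ^ 2) * (6 * th 1 τ 0 * th 5 τ 0 + 10 * th 3 τ 0 ^ 2) -
        th 0 τ x ^ 2 * (2 * th 1 τ 0 * th 7 τ 0 - 2 * th 3 τ 0 * th 5 τ 0) := by
  have h := addition_formula hτ x 6 0
  have hz : ∀ k, Even k → th k τ 0 = 0 := fun k hk => th_even_zero k hk τ
  simp [towF, towW, towSq, towerMul_eq, Finset.sum_range_succ, Nat.choose, hz 0 (by decide),
      hz 2 (by decide), hz 4 (by decide), hz 6 (by decide)] at h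
  linear_combination h / 2

/-! ### Level one modular forms -/

section Modular
open UpperHalfPlane hiding I
open Filter Topology ModularForm MatrixGroups Manifold Derivative Function

/-- A holomorphic level one invariant function of weight `k < 12` that vanishes at the cusp
is zero. -/
lemma eq_zero_of_level_one {k : ℤ} (hk : k < 12) {f : ℍ → ℂ} (hf : MDiff f)
    (hslash : ∀ γ : SL(2, ℤ), f ∣[k] γ = f) (h0 : Tendsto f atImInfty (𝓝 0)) : f = 0 := by
  let F : CuspForm 𝒮ℒ k :=
    { toFun := f
      slash_action_eq' := fun A hA => by
        obtain ⟨A, rfl⟩ := hA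
        exact hslash A
      holo' := hf
      zero_at_cusps' := fun hc => by
        rw [Subgroup.IsArithmetic.isCusp_iff_isCusp_SL2Z] at hc
        rw [OnePoint.isZeroAt_iff_forall_SL2Z hc]
        intro γ _
        rw [hslash]
        exact h0 }
  have h := rank_zero_iff_forall_zero.mp (CuspForm.rank_eq_zero_of_weight_lt_twelve hk) F
  have : (F : ℍ → ℂ) = 0 := by rw [h]; rfl
  exact this

/-! ### Ramanujan's differential equations -/

lemma qParam_one_eq : Periodic.qParam 1 = fun w => cexp (2 * π * I * w) := by
  ext w; simp [Periodic.qParam]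

/-- A convergent `q`-expansion gives the value at the cusp, and the derivative vanishes there. -/
lemma tendsto_of_hasSum {F : ℍ → ℂ} {c : ℕ → ℂ} (hF : MDiff F)
    (hsum : ∀ τ : ℍ, HasSum (fun m ↦ c m • Periodic.qParam 1 τ ^ m) (F τ)) :
    Tendsto F atImInfty (𝓝 (c 0)) ∧ Tendsto (D F) atImInfty (𝓝 0) := by
  have hper : Periodic (F ∘ ofComplex) (1 : ℝ) := by
    intro w
    simp only [comp_apply]
    by_cases hw : 0 < w.im
    · have hw' : 0 < (w + (1 : ℝ)).im := by simpa using hw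
      rw [ofComplex_apply_of_im_pos hw, ofComplex_apply_of_im_pos hw']
      refine (hsum _).unique ?_
      have := hsum ⟨w, hw⟩
      convert! this using 3
      congr 1
      simp only [qParam_one_eq]
      rw [show 2 * π * I * (w + (1 : ℝ)) = 2 * π * I * w + 2 * π * I by push_cast; ring,
        Complex.exp_periodic]
    · have hw' : (w + (1 : ℝ)).im ≤ 0 := by simpa using hw
      rw [ofComplex_apply_of_im_nonpos (not_lt.mp hw), ofComplex_apply_of_im_nonpos hw']
  have hbd := isBoundedAtImInfty_of_hasSum_qExpansion one_pos hsum
  have han := analyticAt_cuspFunction_zero one_pos hper hF hbd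
  have hq := qParam_tendsto_atImInfty one_pos
  have hfp := hasFPowerSeriesOnBall_cuspFunction one_pos han hsum
  have h0 : cuspFunction 1 F 0 = c 0 := by
    have := hfp.coeff_zero (fun _ => 0)
    simpa using this.symm
  constructor
  · rw [← h0]
    refine (han.continuousAt.tendsto.comp hq).congr fun τ => ?_
    exact eq_cuspFunction τ one_ne_zero hper
  · have h1 : Tendsto (fun τ : ℍ => Periodic.qParam 1 τ *
        deriv (cuspFunction 1 F) (Periodic.qParam 1 τ)) atImInfty (𝓝 0) := by
      have := hq.mul (han.deriv.continuousAt.tendsto.comp hq)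
      simpa using this
    refine h1.congr fun τ => ?_
    have hd : DifferentiableAt ℂ (cuspFunction 1 F) (Periodic.qParam 1 τ) :=
      differentiableAt_cuspFunction one_pos hper hF hbd
        (Periodic.norm_qParam_lt_one one_pos τ.im_pos)
    have hqd : HasDerivAt (Periodic.qParam 1) (2 * π * I * Periodic.qParam 1 τ) τ := by
      have := ((hasDerivAt_id (τ : ℂ)).const_mul (2 * π * I)).cexp
      simp only [id, mul_one] at this
      rw [qParam_one_eq, mul_comm (2 * π * I)]
      exact this
    have hF' : F ∘ ofComplex = cuspFunction 1 F ∘ Periodic.qParam 1 := by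
      funext w
      exact (Periodic.eq_cuspFunction one_ne_zero hper w).symm
    rw [normalizedDerivOfComplex, hF', (hd.hasDerivAt.comp (τ : ℂ) hqd).deriv]
    field_simp [two_pi_I_ne]

lemma sigmaD_eq (k n : ℕ) : sigmaD k n = ArithmeticFunction.sigma k n := by
  rw [sigmaD, ArithmeticFunction.sigma_apply]

lemma tsum_eq_tsum_pnat (k : ℕ) (τ : ℍ) :
    ∑' n : ℕ, (sigmaD k (n + 1) : ℂ) * cexp (2 * π * I * τ * (n + 1)) =
      ∑' n : ℕ+, (ArithmeticFunction.sigma k n : ℂ) * cexp (2 * π * I * τ) ^ (n : ℕ) := by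
  rw [tsum_pnat_eq_tsum_succ
    (f := fun n => (ArithmeticFunction.sigma k n : ℂ) * cexp (2 * π * I * τ) ^ n)]
  refine tsum_congr fun n => ?_
  rw [sigmaD_eq, ← Complex.exp_nat_mul]
  congr 2
  push_cast; ring

lemma Eis2_eq (τ : ℍ) : Eis2 τ = EisensteinSeries.E2 τ := by
  rw [Eis2, tsum_eq_tsum_pnat, EisensteinSeries.E2_eq_tsum_cexp]

lemma bernoulli_six : bernoulli 6 = 1 / 42 := by
  rw [bernoulli_eq_bernoulli'_of_ne_one (by decide), bernoulli'_def]
  norm_num [Finset.sum_range_succ, bernoulli'_zero, bernoulli'_one, bernoulli'_two,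
    bernoulli'_three, bernoulli'_four, Nat.choose]
  rw [bernoulli'_eq_zero_of_odd (by decide) (by norm_num)]
  norm_num

lemma Eis4_eq (τ : ℍ) : Eis4 τ = E₄ τ := by
  have h : bernoulli 4 = -1 / 30 := by
    rw [bernoulli_eq_bernoulli'_of_ne_one (by decide), bernoulli'_four]
  rw [Eis4, tsum_eq_tsum_pnat, EisensteinSeries.q_expansion_bernoulli _ (by decide), h]
  norm_num [zpow_natCast]

lemma Eis6_eq (τ : ℍ) : Eis6 τ = E₆ τ := by
  rw [Eis6, tsum_eq_tsum_pnat, EisensteinSeries.q_expansion_bernoulli _ (by decide),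
    bernoulli_six]
  norm_num [zpow_natCast]

lemma tendsto_E2 : Tendsto EisensteinSeries.E2 atImInfty (𝓝 1) ∧
    Tendsto (D EisensteinSeries.E2) atImInfty (𝓝 0) := by
  have h := tendsto_of_hasSum E2_mdifferentiable (fun τ => by
    simpa only [Periodic.qParam, ofReal_one, div_one] using
      EisensteinSeries.hasSum_qExpansion_E2 (z := τ))
  simpa using h

lemma tendsto_E {k : ℕ} (hk : 3 ≤ k) (hk2 : Even k) : Tendsto (E hk) atImInfty (𝓝 1) ∧
    Tendsto (D (E hk)) atImInfty (𝓝 0) := by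
  have h := tendsto_of_hasSum (ModularFormClass.holo (E hk)) (fun τ =>
    ModularForm.hasSum_qExpansion (h := 1) (E hk) one_pos one_mem_strictPeriods_SL τ)
  rwa [EisensteinSeries.E_qExpansion_coeff_zero hk hk2] at h

lemma E_slash {k : ℕ} (hk : 3 ≤ k) (γ : SL(2, ℤ)) : (E hk : ℍ → ℂ) ∣[(k : ℤ)] γ = E hk :=
  SlashInvariantForm.slash_action_eqn (E hk) _ ⟨γ, rfl⟩

/-- Ramanujan's differential equation for `E₄`. -/
lemma ramanujan_four : serreDerivative 4 E₄ + (1 / 3 : ℂ) • (E₆ : ℍ → ℂ) = 0 := by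
  have hE : MDiff (E₄ : ℍ → ℂ) := ModularFormClass.holo E₄
  refine eq_zero_of_level_one (k := 6) (by norm_num) ?_ ?_ ?_
  · exact (serreDerivative_mdifferentiable 4 hE).add
      (MDifferentiable.const_smul (1 / 3 : ℂ) (ModularFormClass.holo E₆))
  · intro γ
    have h := serreDerivative_slash_invariant hE (E_slash (by norm_num : 3 ≤ 4) γ)
    have h6 := E_slash (by norm_num : 3 ≤ 6) γ
    rw [SlashAction.add_slash, SL_smul_slash]
    exact congrArg₂ _ (by simpa using! h) (congrArg _ h6)
  · have h := ((tendsto_E (by norm_num : 3 ≤ 4) (by decide)).2.sub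
      (tendsto_E2.1.mul (tendsto_E (by norm_num : 3 ≤ 4) (by decide)).1 |>.const_mul
       (4 * 12⁻¹ : ℂ))).add ((tendsto_E (by norm_num : 3 ≤ 6) (by decide)).1.const_mul (1 / 3))
    convert! h using 2
    · simp [mul_assoc]
    · norm_num

/-- Ramanujan's differential equation for `E₆`. -/
lemma ramanujan_six :
    serreDerivative 6 E₆ + (1 / 2 : ℂ) • ((E₄ : ℍ → ℂ) * (E₄ : ℍ → ℂ)) = 0 := by
  have hE4 : MDiff (E₄ : ℍ → ℂ) := ModularFormClass.holo E₄
  have hE : MDiff (E₆ : ℍ → ℂ) := ModularFormClass.holo E₆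
  refine eq_zero_of_level_one (k := 8) (by norm_num) ?_ ?_ ?_
  · exact (serreDerivative_mdifferentiable 6 hE).add
      (MDifferentiable.const_smul (1 / 2 : ℂ) (hE4.mul hE4))
  · intro γ
    have h := serreDerivative_slash_invariant hE (E_slash (by norm_num : 3 ≤ 6) γ)
    have h4 := E_slash (by norm_num : 3 ≤ 4) γ
    have h8 := mul_slash_SL2 4 4 γ (E₄ : ℍ → ℂ) (E₄ : ℍ → ℂ)
    rw [SlashAction.add_slash, SL_smul_slash]
    exact congrArg₂ _ (by simpa using! h) (congrArg _ (h8.trans (congrArg₂ _ h4 h4)))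
  · have h4 := (tendsto_E (by norm_num : 3 ≤ 4) (by decide)).1
    have h := ((tendsto_E (by norm_num : 3 ≤ 6) (by decide)).2.sub
      (tendsto_E2.1.mul (tendsto_E (by norm_num : 3 ≤ 6) (by decide)).1 |>.const_mul
       (6 * 12⁻¹ : ℂ))).add ((h4.mul h4).const_mul (1 / 2))
    convert! h using 2
    · simp [mul_assoc]
    · norm_num

lemma E2_slash (γ : SL(2, ℤ)) (z : ℍ) :
    (EisensteinSeries.E2 ∣[(2 : ℤ)] γ) z = EisensteinSeries.E2 z +
      12 * ((2 * π * I)⁻¹ * (γ 1 0 / denom γ z)) := by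
  have hE2z : (EisensteinSeries.E2 ∣[(2 : ℤ)] γ) z =
      EisensteinSeries.E2 z - 1 / (2 * riemannZeta 2) * EisensteinSeries.D2 γ z := by
    simp [EisensteinSeries.E2_slash_action]
  rw [hE2z, EisensteinSeries.D2, riemannZeta_two, sub_eq_add_neg]
  congr 1
  have hd := denom_ne_zero γ z
  have hpi : (π : ℂ) ≠ 0 := by exact_mod_cast pi_ne_zero
  field_simp
  rw [I_sq]
  ring

/-- The derivative of the transformation law of `E₂`. -/
lemma D_E2_slash (γ : SL(2, ℤ)) (z : ℍ) :
    (D EisensteinSeries.E2 ∣[(4 : ℤ)] γ) z = D EisensteinSeries.E2 z +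
      2 * (2 * π * I)⁻¹ * (γ 1 0 / denom γ z) * EisensteinSeries.E2 z +
      12 * ((2 * π * I)⁻¹ * (γ 1 0 / denom γ z)) ^ 2 := by
  have h1 := congrFun (normalizedDerivOfComplex_SL_slash (k := 2) E2_mdifferentiable (γ := γ)) z
  simp only [Pi.sub_apply, E2_slash] at h1
  have h2 : D (EisensteinSeries.E2 ∣[(2 : ℤ)] γ) z = D EisensteinSeries.E2 z -
      12 * ((2 * π * I)⁻¹ * (γ 1 0 / denom γ z)) ^ 2 := by
    have hE := (mdifferentiableAt_iff.mp (E2_mdifferentiable z)).hasDerivAt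
    have hden : HasDerivAt (fun w => (denom γ w)⁻¹)
        (-(γ 1 0 : ℂ) / (denom γ z) ^ 2) (z : ℂ) := by
      have := hasDerivAt_denom_zpow (γ : GL (Fin 2) ℝ) (-1) z
      simp only [zpow_neg_one] at this
      refine this.congr_deriv ?_
      have hd := denom_ne_zero γ z
      simp
      field_simp
    have hcomp : ((EisensteinSeries.E2 ∣[(2 : ℤ)] γ) ∘ ofComplex) =ᶠ[𝓝 ↑z]
        fun w ↦ (EisensteinSeries.E2 ∘ ofComplex) w +
          (12 * (2 * π * I)⁻¹ * γ 1 0) * (denom γ w)⁻¹ := by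
      filter_upwards [isOpen_upperHalfPlaneSet.mem_nhds z.im_pos] with w hw
      simp only [comp_apply, E2_slash]
      rw [ofComplex_apply_of_im_pos hw]
      ring
    rw [normalizedDerivOfComplex,
      ((hE.add (hden.const_mul _)).congr_of_eventuallyEq hcomp).deriv, normalizedDerivOfComplex]
    ring
  rw [h2] at h1
  rw [show (2 : ℤ) + 2 = 4 by norm_num, Int.cast_ofNat] at h1
  linear_combination -h1

/-- Ramanujan's differential equation for `E₂`. -/
lemma ramanujan_two : D EisensteinSeries.E2 +
    (-1 / 12 : ℂ) • (EisensteinSeries.E2 * EisensteinSeries.E2) +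
    (1 / 12 : ℂ) • (E₄ : ℍ → ℂ) = 0 := by
  have hE4 : MDiff (E₄ : ℍ → ℂ) := ModularFormClass.holo E₄
  refine eq_zero_of_level_one (k := 4) (by norm_num) ?_ ?_ ?_
  · exact ((normalizedDerivOfComplex_mdifferentiable E2_mdifferentiable).add
      (MDifferentiable.const_smul (-1 / 12 : ℂ) (E2_mdifferentiable.mul E2_mdifferentiable))).add
      (MDifferentiable.const_smul (1 / 12 : ℂ) hE4)
  · intro γ
    have h4 := E_slash (by norm_num : 3 ≤ 4) γ
    have h2 := mul_slash_SL2 2 2 γ EisensteinSeries.E2 EisensteinSeries.E2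
    rw [SlashAction.add_slash, SlashAction.add_slash, SL_smul_slash, SL_smul_slash]
    congr 1
    · refine (congrArg (fun g => _ + (-1 / 12 : ℂ) • g) h2).trans ?_
      ext z
      simp only [Pi.add_apply, Pi.smul_apply, Pi.mul_apply, smul_eq_mul, D_E2_slash, E2_slash]
      ring
    · congr 1
  · have h4 := (tendsto_E (by norm_num : 3 ≤ 4) (by decide)).1
    have h := (tendsto_E2.2.add ((tendsto_E2.1.mul tendsto_E2.1).const_mul (-1 / 12))).add
      (h4.const_mul (1 / 12))
    convert! h using 2
    norm_num


/-- Transfer of a derivative from the upper half-plane to the complex plane. -/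
lemma hasDerivAt_of_eq {f : ℂ → ℂ} {F : ℍ → ℂ} (h : ∀ τ : ℍ, f τ = F τ) (hF : MDiff F)
    {τ : ℂ} (hτ : 0 < τ.im) : HasDerivAt f (2 * π * I * D F ⟨τ, hτ⟩) τ := by
  have h1 := (mdifferentiableAt_iff.mp (hF ⟨τ, hτ⟩)).hasDerivAt
  have h2 : f =ᶠ[𝓝 τ] F ∘ ofComplex := by
    filter_upwards [isOpen_upperHalfPlaneSet.mem_nhds hτ] with w hw
    rw [comp_apply, ofComplex_apply_of_im_pos hw]
    exact h ⟨w, hw⟩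
  refine (h1.congr_of_eventuallyEq h2).congr_deriv ?_
  rw [normalizedDerivOfComplex, mul_inv_cancel_left₀ two_pi_I_ne]

lemma hasDerivAt_Eis2 {τ : ℂ} (hτ : 0 < τ.im) :
    HasDerivAt Eis2 (2 * π * I * ((Eis2 τ ^ 2 - Eis4 τ) / 12)) τ := by
  refine (hasDerivAt_of_eq Eis2_eq E2_mdifferentiable hτ).congr_deriv ?_
  have h := congrFun ramanujan_two ⟨τ, hτ⟩
  have e2 := Eis2_eq ⟨τ, hτ⟩
  have e4 := Eis4_eq ⟨τ, hτ⟩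
  simp only [Pi.add_apply, Pi.smul_apply, Pi.mul_apply, smul_eq_mul, Pi.zero_apply, ← e2, ← e4] at h
  congr 1
  linear_combination h

lemma hasDerivAt_Eis4 {τ : ℂ} (hτ : 0 < τ.im) :
    HasDerivAt Eis4 (2 * π * I * ((Eis2 τ * Eis4 τ - Eis6 τ) / 3)) τ := by
  refine (hasDerivAt_of_eq Eis4_eq (ModularFormClass.holo E₄) hτ).congr_deriv ?_
  have h := congrFun ramanujan_four ⟨τ, hτ⟩
  have e2 := Eis2_eq ⟨τ, hτ⟩
  have e4 := Eis4_eq ⟨τ, hτ⟩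
  have e6 := Eis6_eq ⟨τ, hτ⟩
  simp only [Pi.add_apply, Pi.smul_apply, smul_eq_mul, Pi.zero_apply,
    serreDerivative_apply, ← e2, ← e4, ← e6] at h
  congr 1
  linear_combination h

lemma hasDerivAt_Eis6 {τ : ℂ} (hτ : 0 < τ.im) :
    HasDerivAt Eis6 (2 * π * I * ((Eis2 τ * Eis6 τ - Eis4 τ ^ 2) / 2)) τ := by
  refine (hasDerivAt_of_eq Eis6_eq (ModularFormClass.holo E₆) hτ).congr_deriv ?_
  have h := congrFun ramanujan_six ⟨τ, hτ⟩
  have e2 := Eis2_eq ⟨τ, hτ⟩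
  have e4 := Eis4_eq ⟨τ, hτ⟩
  have e6 := Eis6_eq ⟨τ, hτ⟩
  simp only [Pi.add_apply, Pi.smul_apply, Pi.mul_apply, smul_eq_mul, Pi.zero_apply,
    serreDerivative_apply, ← e2, ← e4, ← e6] at h
  congr 1
  linear_combination h

/-! ### The theta constant `ϑ'(τ,0)` -/

lemma th_zero_eq_jacobiTheta₂ (τ z : ℂ) :
    th 0 τ z = cexp (π * I * τ / 4 + π * I * z) * jacobiTheta₂ (z + τ / 2 + 1 / 2) τ := by
  rw [th, jacobiTheta₂, ← tsum_mul_left]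
  refine tsum_congr fun n => ?_
  have h : (-1 : ℂ) ^ n = cexp (n * (π * I)) := by rw [Complex.exp_int_mul, Complex.exp_pi_mul_I]
  rw [thTerm, jacobiTheta₂_term, h, pow_zero, mul_one, ← Complex.exp_add, ← Complex.exp_add]
  congr 1
  ring

/-- The transformation of the theta function under `τ ↦ -1/τ`. -/
lemma th_zero_S {τ : ℂ} (hτ : τ ≠ 0) (z : ℂ) :
    th 0 τ z = 1 / (-I * τ) ^ (1 / 2 : ℂ) *
      (cexp (π * I * (1 / 2 - z ^ 2 / τ)) * th 0 (-1 / τ) (z / τ)) := by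
  have h1 := jacobiTheta₂_functional_equation (z + τ / 2 + 1 / 2) τ
  have h2 := jacobiTheta₂_add_left' ((z + τ / 2 + 1 / 2) / τ) (-1 / τ)
  have e : (z + τ / 2 + 1 / 2) / τ + -1 / τ = z / τ + -1 / τ / 2 + 1 / 2 := by field_simp; ring
  rw [e] at h2
  rw [th_zero_eq_jacobiTheta₂, th_zero_eq_jacobiTheta₂, h1, h2]
  have hE : cexp (π * I * τ / 4 + π * I * z) *
      cexp (-π * I * (z + τ / 2 + 1 / 2) ^ 2 / τ) = cexp (π * I * (1 / 2 - z ^ 2 / τ)) *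
        (cexp (π * I * (-1 / τ) / 4 + π * I * (z / τ)) *
          cexp (-π * I * (-1 / τ + 2 * ((z + τ / 2 + 1 / 2) / τ)))) := by
    simp only [← Complex.exp_add]
    congr 1
    field_simp
    ring
  linear_combination (1 / (-I * τ) ^ (1 / 2 : ℂ) *
    jacobiTheta₂ ((z + τ / 2 + 1 / 2) / τ) (-1 / τ)) * hE

lemma th_one_S {τ : ℂ} (hτ : 0 < τ.im) :
    th 1 (-1 / τ) 0 ^ 8 = τ ^ 12 * th 1 τ 0 ^ 8 := by
  have h0 : τ ≠ 0 := by rintro rfl; simp at hτ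
  have hS : 0 < (-1 / τ).im := by
    have := (UpperHalfPlane.mk τ hτ).im_inv_neg_coe_pos
    rwa [show -1 / τ = (-τ)⁻¹ by field_simp]
  have hz : HasDerivAt (fun z : ℂ => z / τ) (1 / τ) 0 := (hasDerivAt_id 0).div_const τ
  have hth := (hasDerivAt_th_z 0 hS ((0 : ℂ) / τ)).comp (0 : ℂ) hz
  have he : HasDerivAt (fun z : ℂ => cexp (π * I * (1 / 2 - z ^ 2 / τ))) 0 0 := by
    have := (((((hasDerivAt_id (0 : ℂ)).pow 2).div_const τ).const_sub (1 / 2)).const_mul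
      (π * I)).cexp
    simpa using this
  have h1 := (he.mul hth).const_mul (1 / (-I * τ) ^ (1 / 2 : ℂ))
  have h2 := (hasDerivAt_th_z 0 hτ 0).congr_of_eventuallyEq
    (Filter.Eventually.of_forall fun z => (th_zero_S h0 z).symm)
  have h3 := h1.unique h2
  have hI : cexp (π * I * (1 / 2)) = I := by
    rw [show (π : ℂ) * I * (1 / 2) = π / 2 * I by ring, Complex.exp_pi_div_two_mul_I]
  have hc0 : -I * τ ≠ 0 := mul_ne_zero (neg_ne_zero.mpr I_ne_zero) h0
  have hc : ((-I * τ) ^ (1 / 2 : ℂ)) ^ 2 = -I * τ := by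
    rw [← Complex.cpow_nat_mul]; norm_num
  have hcne : (-I * τ) ^ (1 / 2 : ℂ) ≠ 0 := by
    intro h; rw [h] at hc; exact hc0 (by rw [← hc]; norm_num)
  set c := (-I * τ) ^ (1 / 2 : ℂ)
  simp only [zero_div, zero_mul, zero_add, ne_eq, OfNat.ofNat_ne_zero, not_false_eq_true, zero_pow,
    sub_zero, hI, comp_apply] at h3
  have h4 : th 1 (-1 / τ) 0 * I = c * τ * th 1 τ 0 := by
    have hp := two_pi_I_ne
    field_simp at h3
    rw [neg_div]
    linear_combination h3
  calc th 1 (-1 / τ) 0 ^ 8 = (th 1 (-1 / τ) 0 * I) ^ 8 := by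
        rw [mul_pow, show (I : ℂ) ^ 8 = (I ^ 4) ^ 2 by ring, I_pow_four]; ring
    _ = (c ^ 2) ^ 4 * τ ^ 8 * th 1 τ 0 ^ 8 := by rw [h4]; ring
    _ = _ := by
        rw [hc, mul_pow, show (-I : ℂ) ^ 4 = I ^ 4 by ring, I_pow_four]; ring

lemma th_one_T (τ : ℂ) : th 1 (τ + 1) 0 ^ 8 = th 1 τ 0 ^ 8 := by
  have h : th 1 (τ + 1) 0 = cexp (π * I / 4) * th 1 τ 0 := by
    rw [th, th, ← tsum_mul_left]
    refine tsum_congr fun n => ?_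
    have hn : cexp (π * I * n * (n + 1)) = 1 := by
      obtain ⟨m, hm⟩ := Int.even_mul_succ_self n
      have : π * I * n * (n + 1) = m * (2 * π * I) := by
        have : (n : ℂ) * (n + 1) = m + m := by exact_mod_cast hm
        linear_combination (π * I) * this
      rw [this, Complex.exp_int_mul_two_pi_mul_I]
    simp only [thTerm]
    rw [show π * I * (τ + 1) * ((n : ℂ) + 1 / 2) ^ 2 + 2 * π * I * 0 * ((n : ℂ) + 1 / 2) =
      π * I / 4 + (π * I * τ * ((n : ℂ) + 1 / 2) ^ 2 + 2 * π * I * 0 * ((n : ℂ) + 1 / 2)) +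
        π * I * n * (n + 1) by ring, Complex.exp_add, hn, Complex.exp_add]
    ring
  rw [h, mul_pow, ← Complex.exp_nat_mul]
  rw [show ((8 : ℕ) : ℂ) * (π * I / 4) = 2 * π * I by push_cast; ring, Complex.exp_two_pi_mul_I,
    one_mul]

/-- The leading term of `th 1 τ 0` at the cusp. -/
lemma tendsto_th_one :
    Tendsto (fun τ : ℍ => cexp (-(π * I * τ / 4)) * th 1 τ 0) atImInfty (𝓝 1) := by
  have hform : ∀ (n : ℤ) (τ : ℍ), cexp (-(π * I * τ / 4)) * thTerm 1 n τ 0 =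
      (-1 : ℂ) ^ n * (n + 1 / 2) * cexp (π * I * τ * (n * (n + 1))) := by
    intro n τ
    rw [thTerm, mul_left_comm, ← Complex.exp_add, pow_one]
    congr 2; ring
  have hnorm : ∀ (n : ℤ) (τ : ℍ), ‖cexp (π * I * τ * (n * (n + 1)))‖ =
      Real.exp (-((π * (n * (n + 1) : ℤ)) * τ.im)) := by
    intro n τ
    rw [Complex.norm_exp]
    congr 1
    rw [show (π : ℂ) * I * τ * (n * (n + 1)) =
      ((π * (n * (n + 1) : ℤ) : ℝ) : ℂ) * (τ * I) by push_cast; ring,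
      re_ofReal_mul, mul_I_re, coe_im]
    ring
  have hlim : Tendsto (fun τ : ℍ => ∑' n : ℤ, cexp (-(π * I * τ / 4)) * thTerm 1 n τ 0) atImInfty
      (𝓝 (∑' n : ℤ, if n = 0 ∨ n = -1 then (1 / 2 : ℂ) else 0)) := by
    refine tendsto_tsum_of_dominated_convergence
      (bound := fun n => Real.exp (π / 4) * thBound 1 0 1 n)
      ((summable_thBound 1 0 le_rfl one_pos).mul_left _) ?_ ?_
    · intro n
      simp only [hform]
      split_ifs with hn
      · rcases hn with rfl | rfl
        · simp
        · refine tendsto_const_nhds.congr fun τ => ?_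
          norm_num
      · rw [not_or] at hn
        have hpos : 0 < n * (n + 1) := by
          rcases lt_trichotomy n (-1) with h | h | h
          · nlinarith
          · exact absurd h hn.2
          · have : 0 < n := by have := hn.1; omega
            positivity
        rw [← mul_zero ((-1 : ℂ) ^ n * (n + 1 / 2))]
        refine Tendsto.const_mul _ ?_
        rw [tendsto_zero_iff_norm_tendsto_zero]
        simp only [hnorm]
        refine Real.tendsto_exp_neg_atTop_nhds_zero.comp ?_
        exact Tendsto.const_mul_atTop (mul_pos pi_pos (by exact_mod_cast hpos)) tendsto_comap
    · have : ∀ᶠ τ : ℍ in atImInfty, 1 ≤ τ.im := tendsto_comap.eventually_ge_atTop 1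
      filter_upwards [this] with τ hτ n
      have h1 : ‖((n : ℂ) + 1 / 2)‖ = |(n : ℝ) + 1 / 2| := by
        rw [← Real.norm_eq_abs, ← Complex.norm_real]; push_cast; rfl
      have h2 : (0 : ℝ) ≤ (n * (n + 1) : ℤ) := by
        have : 0 ≤ n * (n + 1) := by
          rcases le_or_gt 0 n with h | h
          · positivity
          · nlinarith
        exact_mod_cast this
      rw [hform, norm_mul, norm_mul, norm_zpow, norm_neg, norm_one, one_zpow, one_mul, hnorm, h1,
        thBound, pow_one, mul_left_comm, ← Real.exp_add]
      gcongr
      have h3 := mul_le_mul_of_nonneg_left hτ (mul_nonneg pi_pos.le h2)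
      push_cast at h3 ⊢
      linarith
  have hsum : (∑' n : ℤ, if n = 0 ∨ n = -1 then (1 / 2 : ℂ) else 0) = 1 := by
    rw [tsum_eq_sum (s := {0, -1})]
    · norm_num
    · intro b hb
      simp only [Finset.mem_insert, Finset.mem_singleton] at hb
      rw [if_neg hb]
  rw [hsum] at hlim
  refine hlim.congr fun τ => ?_
  rw [th, tsum_mul_left]

lemma th_one_slash (γ : SL(2, ℤ)) :
    (fun τ : ℍ => th 1 τ 0 ^ 8) ∣[(12 : ℤ)] γ = fun τ : ℍ => th 1 τ 0 ^ 8 := by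
  refine SlashInvariantForm.slash_action_generators_SL2Z ?_ ?_ γ
  · ext z
    have h := th_one_S z.im_pos
    have hz : (z : ℂ) ≠ 0 := z.ne_zero
    suffices th 1 (-(↑z)⁻¹) 0 ^ 8 * ((z : ℂ) ^ 12)⁻¹ = th 1 z 0 ^ 8 by
      rw [SL_slash_apply, UpperHalfPlane.modular_S_smul, ModularGroup.denom_apply]
      simpa [ModularGroup.S] using! this
    rw [show -(z : ℂ)⁻¹ = -1 / z by field_simp, h]
    field_simp
  · ext z
    have h := th_one_T z
    rw [SL_slash_apply, modular_T_smul, ModularGroup.denom_apply]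
    simpa [ModularGroup.T, add_comm] using! h

/-- The eighth power of the theta constant `ϑ'(τ,0)` is a nonzero multiple of the
discriminant. -/
lemma th_one_pow_eq : ∃ c : ℂ, c ≠ 0 ∧ ∀ τ : ℂ, 0 < τ.im →
    th 1 τ 0 ^ 8 = c * ModularForm.eta τ ^ 24 := by
  have hzero : Tendsto (fun τ : ℍ => th 1 τ 0 ^ 8) atImInfty (𝓝 0) := by
    have h1 : Tendsto (fun τ : ℍ => cexp (π * I * τ / 4)) atImInfty (𝓝 0) := by
      rw [tendsto_zero_iff_norm_tendsto_zero]
      have hnorm : ∀ τ : ℍ, ‖cexp (π * I * τ / 4)‖ = Real.exp (-((π / 4) * τ.im)) := by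
        intro τ
        rw [Complex.norm_exp]
        congr 1
        rw [show (π : ℂ) * I * τ / 4 = ((π / 4 : ℝ) : ℂ) * (τ * I) by push_cast; ring,
          re_ofReal_mul, mul_I_re, coe_im]
        ring
      simp only [hnorm]
      exact Real.tendsto_exp_neg_atTop_nhds_zero.comp
        (Tendsto.const_mul_atTop (by positivity) tendsto_comap)
    have h2 := (h1.mul tendsto_th_one).pow 8
    rw [show ((0 : ℂ) * 1) ^ 8 = 0 by norm_num] at h2
    refine h2.congr fun τ => ?_
    rw [← mul_assoc, ← Complex.exp_add, add_neg_cancel, Complex.exp_zero, one_mul]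
  let F : CuspForm 𝒮ℒ 12 :=
    { toFun := fun τ : ℍ => th 1 τ 0 ^ 8
      slash_action_eq' := fun A hA => by
        obtain ⟨A, rfl⟩ := hA
        exact th_one_slash A
      holo' := by
        rw [UpperHalfPlane.mdifferentiable_iff]
        refine .congr (fun z hz ↦ ((hasDerivAt_th_τ 1 hz 0).differentiableAt.pow
          8).differentiableWithinAt) fun z hz ↦ ?_
        simp [ofComplex_apply_of_im_pos hz]
      zero_at_cusps' := fun hc => by
        rw [Subgroup.IsArithmetic.isCusp_iff_isCusp_SL2Z] at hc
        rw [OnePoint.isZeroAt_iff_forall_SL2Z hc]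
        intro γ _
        rw [th_one_slash]
        exact hzero }
  obtain ⟨c, hc⟩ := CuspForm.exists_smul_discriminant_of_weight_eq_twelve F
  have hF : ∀ τ : ℂ, 0 < τ.im → th 1 τ 0 ^ 8 = c * ModularForm.eta τ ^ 24 := fun τ hτ =>
    (congrArg (fun f : CuspForm 𝒮ℒ 12 => f ⟨τ, hτ⟩) hc).symm
  refine ⟨c, ?_, hF⟩
  rintro rfl
  have hne := tendsto_th_one.eventually_ne one_ne_zero
  obtain ⟨τ, hτ⟩ := hne.exists
  have := hF τ τ.im_pos
  rw [zero_mul] at this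
  exact hτ (by rw [pow_eq_zero_iff (by norm_num) |>.mp this, mul_zero])

lemma th_one_ne_zero {τ : ℂ} (hτ : 0 < τ.im) : th 1 τ 0 ≠ 0 := by
  obtain ⟨c, hc, h⟩ := th_one_pow_eq
  intro h0
  have := h τ hτ
  rw [h0, zero_pow (by norm_num)] at this
  exact mul_ne_zero hc (pow_ne_zero 24 (eta_ne_zero hτ)) this.symm

/-- The logarithmic derivative of `ϑ'(τ,0)⁸ = c η²⁴`, using the heat equation for `ϑ`. -/
lemma th_three_zero {τ : ℂ} (hτ : 0 < τ.im) : th 3 τ 0 = Eis2 τ / 4 * th 1 τ 0 := by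
  obtain ⟨c, hc, h⟩ := th_one_pow_eq
  have hη := eta_ne_zero hτ
  have ht := th_one_ne_zero hτ
  have hl := logDeriv_eta_eq_E2 ⟨τ, hτ⟩
  rw [← Eis2_eq, logDeriv_apply] at hl
  have hd : deriv ModularForm.eta τ = π * I / 12 * Eis2 τ * ModularForm.eta τ := by
    rw [div_eq_iff hη] at hl
    exact hl
  have h1 := ((differentiableAt_eta_of_mem_upperHalfPlaneSet hτ).hasDerivAt.pow 24).const_mul c
  have h2 := (hasDerivAt_th_τ 1 hτ 0).pow 8
  have h3 := h2.unique (h1.congr_of_eventuallyEq (by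
    filter_upwards [isOpen_upperHalfPlaneSet.mem_nhds hτ] with w hw
    exact h w hw))
  rw [hd] at h3
  have h4 := h τ hτ
  have hpi : (π : ℂ) ≠ 0 := by exact_mod_cast pi_ne_zero
  refine mul_left_cancel₀ (mul_ne_zero (mul_ne_zero hpi I_ne_zero) (pow_ne_zero 7 ht)) ?_
  norm_num at h3
  linear_combination h3 / 8 - (π * I * Eis2 τ / 4) * h4

lemma th_five_zero {τ : ℂ} (hτ : 0 < τ.im) :
    th 5 τ 0 = (5 * Eis2 τ ^ 2 - 2 * Eis4 τ) / 48 * th 1 τ 0 := by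
  have h1 := ((hasDerivAt_Eis2 hτ).div_const 4).mul (hasDerivAt_th_τ 1 hτ 0)
  have h2 := (hasDerivAt_th_τ 3 hτ 0).unique (h1.congr_of_eventuallyEq (by
    filter_upwards [isOpen_upperHalfPlaneSet.mem_nhds hτ] with w hw
    exact th_three_zero hw))
  have h3 := th_three_zero hτ
  have hpi : (π : ℂ) ≠ 0 := by exact_mod_cast pi_ne_zero
  refine mul_left_cancel₀ (mul_ne_zero hpi I_ne_zero) ?_
  norm_num at h2
  linear_combination h2 + π * I * (Eis2 τ / 4) * h3

lemma th_seven_zero {τ : ℂ} (hτ : 0 < τ.im) :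
    th 7 τ 0 = (35 * Eis2 τ ^ 3 - 42 * Eis2 τ * Eis4 τ + 16 * Eis6 τ) / 576 * th 1 τ 0 := by
  have h1 := ((((hasDerivAt_Eis2 hτ).pow 2).const_mul 5).sub
    ((hasDerivAt_Eis4 hτ).const_mul 2)).div_const 48 |>.mul (hasDerivAt_th_τ 1 hτ 0)
  have h2 := (hasDerivAt_th_τ 5 hτ 0).unique (h1.congr_of_eventuallyEq (by
    filter_upwards [isOpen_upperHalfPlaneSet.mem_nhds hτ] with w hw
    exact th_five_zero hw))
  have h3 := th_three_zero hτ
  have hpi : (π : ℂ) ≠ 0 := by exact_mod_cast pi_ne_zero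
  refine mul_left_cancel₀ (mul_ne_zero hpi I_ne_zero) ?_
  norm_num at h2
  linear_combination h2 + π * I * ((5 * Eis2 τ ^ 2 - 2 * Eis4 τ) / 48) * h3

end Modular

/-! ### Weierstrass relations and heat equations -/

section Heat
open Filter Topology

/-- The ratio `∂ᵏϑ/ϑ`, with `∂` the derivative in `u = 2πiz`. -/
def rk (k : ℕ) (τ z : ℂ) : ℂ := th k τ z / th 0 τ z

lemma eventually_z {τ z : ℂ} (hτ : 0 < τ.im) (h : th 0 τ z ≠ 0) :
    ∀ᶠ w in 𝓝 z, th 0 τ w ≠ 0 :=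
  (hasDerivAt_th_z 0 hτ z).continuousAt.eventually_ne h

lemma eventually_τ {τ z : ℂ} (hτ : 0 < τ.im) (h : th 0 τ z ≠ 0) :
    ∀ᶠ t in 𝓝 τ, 0 < t.im ∧ th 0 t z ≠ 0 := by
  filter_upwards [UpperHalfPlane.isOpen_upperHalfPlaneSet.mem_nhds hτ,
    (hasDerivAt_th_τ 0 hτ z).continuousAt.eventually_ne h] with t h1 h2
  exact ⟨h1, h2⟩

lemma hasDerivAt_rk_z (k : ℕ) {τ z : ℂ} (hτ : 0 < τ.im) (h : th 0 τ z ≠ 0) :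
    HasDerivAt (fun w => rk k τ w)
      (2 * π * I * (rk (k + 1) τ z - rk k τ z * rk 1 τ z)) z := by
  refine ((hasDerivAt_th_z k hτ z).fun_div (hasDerivAt_th_z 0 hτ z) h).congr_deriv ?_
  simp only [rk, zero_add]
  field_simp

lemma hasDerivAt_rk_τ (k : ℕ) {τ z : ℂ} (hτ : 0 < τ.im) (h : th 0 τ z ≠ 0) :
    HasDerivAt (fun t => rk k t z)
      (2 * π * I * ((rk (k + 2) τ z - rk k τ z * rk 2 τ z) / 2)) τ := by
  refine ((hasDerivAt_th_τ k hτ z).fun_div (hasDerivAt_th_τ 0 hτ z) h).congr_deriv ?_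
  simp only [rk, zero_add]
  field_simp

lemma th_eq_rk (k : ℕ) {τ z : ℂ} (h : th 0 τ z ≠ 0) : th k τ z = rk k τ z * th 0 τ z := by
  rw [rk, div_mul_cancel₀ _ h]

/-- `bilinear_four` in terms of the ratios `rk`. -/
lemma rk_four {τ z : ℂ} (hτ : 0 < τ.im) (h : th 0 τ z ≠ 0) :
    rk 4 τ z - 4 * rk 1 τ z * rk 3 τ z + 3 * rk 2 τ z ^ 2 - (rk 2 τ z - rk 1 τ z ^ 2) * Eis2 τ
      + (Eis2 τ ^ 2 - Eis4 τ) / 24 = 0 := by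
  have hb := bilinear_four hτ z
  have ht := th_one_ne_zero hτ
  rw [th_three_zero hτ, th_five_zero hτ, th_eq_rk 1 h, th_eq_rk 2 h, th_eq_rk 3 h,
    th_eq_rk 4 h] at hb
  refine mul_left_cancel₀ (mul_ne_zero (pow_ne_zero 2 ht) (pow_ne_zero 2 h)) ?_
  linear_combination hb

/-- The `z`-derivative of the relation `rk_four`. -/
lemma rk_five {τ z : ℂ} (hτ : 0 < τ.im) (h : th 0 τ z ≠ 0) :
    rk 5 τ z - 3 * rk 1 τ z * rk 4 τ z + 2 * rk 2 τ z * rk 3 τ z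
      - (rk 3 τ z - rk 1 τ z * rk 2 τ z) * Eis2 τ
      + rk 1 τ z * (Eis2 τ ^ 2 - Eis4 τ) / 12 = 0 := by
  have d := fun k => hasDerivAt_rk_z k hτ h
  have h1 := ((((d 4).sub (((d 1).const_mul 4).mul (d 3))).add (((d 2).pow 2).const_mul 3)).sub
    (((d 2).sub ((d 1).pow 2)).mul_const (Eis2 τ))).add_const ((Eis2 τ ^ 2 - Eis4 τ) / 24)
  have h2 := h1.unique ((hasDerivAt_const z (0 : ℂ)).congr_of_eventuallyEq (by
    filter_upwards [eventually_z hτ h] with w hw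
    exact rk_four hτ hw))
  refine mul_left_cancel₀ two_pi_I_ne ?_
  norm_num at h2
  linear_combination h2 + 2 * π * I * 2 * rk 1 τ z * rk_four hτ h

/-- The `z`-derivative of the relation `rk_five`. -/
lemma rk_six {τ z : ℂ} (hτ : 0 < τ.im) (h : th 0 τ z ≠ 0) :
    rk 6 τ z - 2 * rk 1 τ z * rk 5 τ z - rk 2 τ z * rk 4 τ z + 2 * rk 3 τ z ^ 2
      - (rk 4 τ z - rk 2 τ z ^ 2) * Eis2 τ
      + (rk 2 τ z + rk 1 τ z ^ 2) * (Eis2 τ ^ 2 - Eis4 τ) / 12 = 0 := by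
  have d := fun k => hasDerivAt_rk_z k hτ h
  have h1 := ((((d 5).sub (((d 1).const_mul 3).mul (d 4))).add
    (((d 2).const_mul 2).mul (d 3))).sub
    (((d 3).sub ((d 1).mul (d 2))).mul_const (Eis2 τ))).add
      (((d 1).mul_const (Eis2 τ ^ 2 - Eis4 τ)).div_const 12)
  have h2 := h1.unique ((hasDerivAt_const z (0 : ℂ)).congr_of_eventuallyEq (by
    filter_upwards [eventually_z hτ h] with w hw
    exact rk_five hτ hw))
  refine mul_left_cancel₀ two_pi_I_ne ?_
  norm_num at h2
  linear_combination h2 + 2 * π * I * 2 * rk 1 τ z * rk_five hτ h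

/-- The Weierstrass function `℘/(2πi)²`, as `E₂/12 - ∂²log ϑ`. -/
def wpP (τ z : ℂ) : ℂ := Eis2 τ / 12 - rk 2 τ z + rk 1 τ z ^ 2

/-- The derivative `∂ wpP`, i.e. `-∂³log ϑ`. -/
def wpR (τ z : ℂ) : ℂ := -(rk 3 τ z - 3 * rk 1 τ z * rk 2 τ z + 2 * rk 1 τ z ^ 3)

/-- The sixth power of `ϑ(τ,z)/∂ϑ(τ,0)`. -/
def sigA (τ z : ℂ) : ℂ := (th 0 τ z / th 1 τ 0) ^ 6

/-- The Weierstrass equation. The coefficients in the final combination eliminate `rk 6`, `rk 5` and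
`rk 4` in turn from `bilinear_six`. -/
lemma wpR_sq {τ z : ℂ} (hτ : 0 < τ.im) (h : th 0 τ z ≠ 0) :
    wpR τ z ^ 2 = 4 * wpP τ z ^ 3 - Eis4 τ / 12 * wpP τ z + Eis6 τ / 216 := by
  have hb := bilinear_six hτ z
  have ht := th_one_ne_zero hτ
  rw [th_three_zero hτ, th_five_zero hτ, th_seven_zero hτ, th_eq_rk 1 h, th_eq_rk 2 h,
    th_eq_rk 3 h, th_eq_rk 4 h, th_eq_rk 5 h, th_eq_rk 6 h] at hb
  have h6 : rk 6 τ z - 6 * rk 1 τ z * rk 5 τ z + 15 * rk 2 τ z * rk 4 τ z - 10 * rk 3 τ z ^ 2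
      - (rk 2 τ z - rk 1 τ z ^ 2) * ((5 * Eis2 τ ^ 2 - 2 * Eis4 τ) / 8 + 5 * Eis2 τ ^ 2 / 8)
      + ((35 * Eis2 τ ^ 3 - 42 * Eis2 τ * Eis4 τ + 16 * Eis6 τ) / 288 -
        Eis2 τ * (5 * Eis2 τ ^ 2 - 2 * Eis4 τ) / 96) = 0 := by
    refine mul_left_cancel₀ (mul_ne_zero (pow_ne_zero 2 ht) (pow_ne_zero 2 h)) ?_
    linear_combination hb
  rw [wpR, wpP]
  linear_combination (-1 / 12) * (h6 - rk_six hτ h + 4 * rk 1 τ z * rk_five hτ h -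
    (16 * rk 2 τ z - 12 * rk 1 τ z ^ 2 + Eis2 τ) * rk_four hτ h)

lemma hasDerivAt_rk_one_z {τ z : ℂ} (hτ : 0 < τ.im) (h : th 0 τ z ≠ 0) :
    HasDerivAt (fun w => rk 1 τ w) (2 * π * I * (Eis2 τ / 12 - wpP τ z)) z := by
  refine (hasDerivAt_rk_z 1 hτ h).congr_deriv ?_
  rw [wpP]; ring

lemma hasDerivAt_wpP_z {τ z : ℂ} (hτ : 0 < τ.im) (h : th 0 τ z ≠ 0) :
    HasDerivAt (fun w => wpP τ w) (2 * π * I * wpR τ z) z := by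
  have d := fun k => hasDerivAt_rk_z k hτ h
  refine (((d 2).const_sub (Eis2 τ / 12)).fun_add ((d 1).fun_pow 2)).congr_deriv ?_
  norm_num [wpR]; ring

lemma hasDerivAt_wpR_z {τ z : ℂ} (hτ : 0 < τ.im) (h : th 0 τ z ≠ 0) :
    HasDerivAt (fun w => wpR τ w) (2 * π * I * (6 * wpP τ z ^ 2 - Eis4 τ / 24)) z := by
  have d := fun k => hasDerivAt_rk_z k hτ h
  refine ((((d 3).fun_sub (((d 1).const_mul 3).fun_mul (d 2))).fun_add
    (((d 1).fun_pow 3).const_mul 2)).fun_neg).congr_deriv ?_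
  norm_num [wpP]
  linear_combination (-2 * π * I) * rk_four hτ h

lemma hasDerivAt_sigA_z {τ z : ℂ} (hτ : 0 < τ.im) (h : th 0 τ z ≠ 0) :
    HasDerivAt (fun w => sigA τ w) (2 * π * I * (6 * rk 1 τ z * sigA τ z)) z := by
  refine (((hasDerivAt_th_z 0 hτ z).div_const (th 1 τ 0)).fun_pow 6).congr_deriv ?_
  norm_num [sigA, th_eq_rk 1 h]; ring

lemma hasDerivAt_wpP_τ {τ z : ℂ} (hτ : 0 < τ.im) (h : th 0 τ z ≠ 0) :
    HasDerivAt (fun t => wpP t z) (2 * π * I * (2 * wpP τ z ^ 2 - Eis4 τ / 36 +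
      rk 1 τ z * wpR τ z + Eis2 τ * wpP τ z / 6)) τ := by
  have d := fun k => hasDerivAt_rk_τ k hτ h
  refine ((((hasDerivAt_Eis2 hτ).div_const 12).fun_sub (d 2)).fun_add
    ((d 1).fun_pow 2)).congr_deriv ?_
  norm_num [wpP, wpR]
  linear_combination (-π * I) * rk_four hτ h

lemma hasDerivAt_sigA_τ {τ z : ℂ} (hτ : 0 < τ.im) (h : th 0 τ z ≠ 0) :
    HasDerivAt (fun t => sigA t z) (2 * π * I * (sigA τ z *
      (-3 * wpP τ z - Eis2 τ / 2 + 3 * rk 1 τ z ^ 2))) τ := by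
  have ht := th_one_ne_zero hτ
  refine (((hasDerivAt_th_τ 0 hτ z).fun_div (hasDerivAt_th_τ 1 hτ 0) ht).fun_pow 6).congr_deriv ?_
  norm_num [sigA, th_eq_rk 2 h, th_three_zero hτ, wpP]
  field_simp
  ring

lemma phi03_eq {τ z : ℂ} (hτ : 0 < τ.im) (h : th 0 τ z ≠ 0) :
    phi03 τ z = wpR τ z ^ 2 * sigA τ z := by
  have ht := th_one_ne_zero hτ
  have h2 := th_two_mul hτ z
  rw [th_eq_rk 1 h, th_eq_rk 2 h, th_eq_rk 3 h] at h2
  have h3 : th 0 τ (2 * z) = - wpR τ z * th 0 τ z ^ 4 / th 1 τ 0 ^ 3 := by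
    rw [eq_div_iff (pow_ne_zero 3 ht), wpR]
    linear_combination h2
  rw [phi03, thetaJ_eq_th, thetaJ_eq_th, h3, sigA]
  field_simp

/-! ### Heat operators on cubics in the Weierstrass function -/

/-- A cubic polynomial in `wpP` with coefficients depending on `τ`, times `sigA`. -/
def cubicA (c : Fin 4 → ℂ → ℂ) (τ z : ℂ) : ℂ :=
  (c 0 τ + c 1 τ * wpP τ z + c 2 τ * wpP τ z ^ 2 + c 3 τ * wpP τ z ^ 3) * sigA τ z

/-- The heat operators only see the values on `ϑ ≠ 0`, which is open in each variable. -/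
lemma heatMod_congr {F G : ℂ → ℂ → ℂ} (m k : ℚ)
    (hFG : ∀ τ z : ℂ, 0 < τ.im → th 0 τ z ≠ 0 → F τ z = G τ z) {τ z : ℂ} (hτ : 0 < τ.im)
    (h : th 0 τ z ≠ 0) : heatMod m k F τ z = heatMod m k G τ z := by
  have h1 : (fun t => F t z) =ᶠ[𝓝 τ] fun t => G t z := by
    filter_upwards [eventually_τ hτ h] with t ht
    exact hFG t z ht.1 ht.2
  have h2 : F τ =ᶠ[𝓝 z] G τ := by
    filter_upwards [eventually_z hτ h] with w hw
    exact hFG τ w hτ hw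
  rw [heatMod, heatMod, heatOp, heatOp, h1.deriv_eq, h2.deriv.deriv_eq, hFG τ z hτ h]

/-- The action of the modular heat operator on `cubicA`; `d i` is `q d/dq` of `c i`.
The terms with `rk 1` cancel because the index is `3`, and there is no quartic term because the
leading coefficient is `-2(2r-5)(r-3)` in degree `r`, which vanishes for `r = 3`. -/
lemma heatMod_cubicA (k : ℚ) {c d e : Fin 4 → ℂ → ℂ}
    (hc : ∀ i, ∀ τ : ℂ, 0 < τ.im → HasDerivAt (c i) (2 * π * I * d i τ) τ)
    (he0 : ∀ τ, e 0 τ = 12 * d 0 τ - 7 / 24 * Eis4 τ * c 1 τ - Eis6 τ / 108 * c 2 τ -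
      (6 + k) * Eis2 τ * c 0 τ)
    (he1 : ∀ τ, e 1 τ = 12 * d 1 τ - 5 / 12 * Eis4 τ * c 2 τ - Eis6 τ / 36 * c 3 τ -
      30 * c 0 τ - (4 + k) * Eis2 τ * c 1 τ)
    (he2 : ∀ τ, e 2 τ = 12 * d 2 τ - 12 * c 1 τ - 3 / 8 * Eis4 τ * c 3 τ -
      (2 + k) * Eis2 τ * c 2 τ)
    (he3 : ∀ τ, e 3 τ = 12 * d 3 τ - 2 * c 2 τ - k * Eis2 τ * c 3 τ)
    {τ z : ℂ} (hτ : 0 < τ.im) (h : th 0 τ z ≠ 0) :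
    heatMod 3 k (cubicA c) τ z = cubicA e τ z := by
  have hpi : (π : ℂ) ≠ 0 := by exact_mod_cast pi_ne_zero
  have hQτ := ((((hc 0 τ hτ).fun_add ((hc 1 τ hτ).fun_mul (hasDerivAt_wpP_τ hτ h))).fun_add
    ((hc 2 τ hτ).fun_mul ((hasDerivAt_wpP_τ hτ h).fun_pow 2))).fun_add
    ((hc 3 τ hτ).fun_mul ((hasDerivAt_wpP_τ hτ h).fun_pow 3))).fun_mul (hasDerivAt_sigA_τ hτ h)
  -- the polynomial, its derivative in `wpP`, and their derivatives in `z`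
  have hQ : ∀ w, th 0 τ w ≠ 0 → HasDerivAt (fun w => c 0 τ + c 1 τ * wpP τ w +
      c 2 τ * wpP τ w ^ 2 + c 3 τ * wpP τ w ^ 3)
      (2 * π * I * ((c 1 τ + 2 * c 2 τ * wpP τ w + 3 * c 3 τ * wpP τ w ^ 2) * wpR τ w)) w := by
    intro w hw
    have dP := hasDerivAt_wpP_z hτ hw
    refine ((((dP.const_mul (c 1 τ)).const_add (c 0 τ)).fun_add
      ((dP.fun_pow 2).const_mul (c 2 τ))).fun_add
      ((dP.fun_pow 3).const_mul (c 3 τ))).congr_deriv ?_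
    norm_num; ring
  have hQ' : HasDerivAt (fun w => c 1 τ + 2 * c 2 τ * wpP τ w + 3 * c 3 τ * wpP τ w ^ 2)
      (2 * π * I * ((2 * c 2 τ + 6 * c 3 τ * wpP τ z) * wpR τ z)) z := by
    have dP := hasDerivAt_wpP_z hτ h
    refine (((dP.const_mul (2 * c 2 τ)).const_add (c 1 τ)).fun_add
      ((dP.fun_pow 2).const_mul (3 * c 3 τ))).congr_deriv ?_
    norm_num; ring
  have h1 : deriv (cubicA c τ) =ᶠ[𝓝 z] fun w => 2 * π * I *
      (((c 1 τ + 2 * c 2 τ * wpP τ w + 3 * c 3 τ * wpP τ w ^ 2) * wpR τ w +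
        6 * (rk 1 τ w * (c 0 τ + c 1 τ * wpP τ w + c 2 τ * wpP τ w ^ 2 + c 3 τ * wpP τ w ^ 3)))
          * sigA τ w) := by
    filter_upwards [eventually_z hτ h] with w hw
    refine (((hQ w hw).fun_mul (hasDerivAt_sigA_z hτ hw)).congr_deriv ?_).deriv
    ring
  have h2 := ((((hQ'.fun_mul (hasDerivAt_wpR_z hτ h)).fun_add
    (((hasDerivAt_rk_one_z hτ h).fun_mul (hQ z h)).const_mul 6)).fun_mul
    (hasDerivAt_sigA_z hτ h)).const_mul (2 * π * I))
  have hR := wpR_sq hτ h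
  have e1 : ∀ x : ℂ, 12 / (2 * π * I) * (2 * π * I * x) = 12 * x := fun x => by
    field_simp
  have e2 : ∀ x : ℂ, 3 / (4 * π ^ 2 * ((3 : ℚ) : ℂ)) * (2 * π * I * (2 * π * I * x)) = -x :=
    fun x => by
      push_cast
      field_simp
      rw [I_sq]; ring
  have hτ' : deriv (fun t => cubicA c t z) τ = 2 * π * I * ((d 0 τ + d 1 τ * wpP τ z +
      d 2 τ * wpP τ z ^ 2 + d 3 τ * wpP τ z ^ 3 +
      (c 1 τ + 2 * c 2 τ * wpP τ z + 3 * c 3 τ * wpP τ z ^ 2) * (2 * wpP τ z ^ 2 - Eis4 τ / 36 +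
      rk 1 τ z * wpR τ z + Eis2 τ * wpP τ z / 6) +
      (c 0 τ + c 1 τ * wpP τ z + c 2 τ * wpP τ z ^ 2 + c 3 τ * wpP τ z ^ 3) *
      (-3 * wpP τ z - Eis2 τ / 2 + 3 * rk 1 τ z ^ 2)) * sigA τ z) := by
    refine (hQτ.congr_deriv ?_).deriv
    norm_num; ring
  have h3 : deriv (deriv (cubicA c τ)) z = 2 * π * I * (2 * π * I * (((2 * c 2 τ +
      6 * c 3 τ * wpP τ z) * wpR τ z ^ 2 +
      (c 1 τ + 2 * c 2 τ * wpP τ z + 3 * c 3 τ * wpP τ z ^ 2) *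
        (6 * wpP τ z ^ 2 - Eis4 τ / 24 + 12 * rk 1 τ z * wpR τ z) +
      (c 0 τ + c 1 τ * wpP τ z + c 2 τ * wpP τ z ^ 2 + c 3 τ * wpP τ z ^ 3) *
        (6 * (Eis2 τ / 12 - wpP τ z) + 36 * rk 1 τ z ^ 2)) * sigA τ z)) := by
    rw [h1.deriv_eq, h2.deriv]
    ring
  rw [heatMod, heatOp, h3, hτ', e1, e2]
  simp only [cubicA, he0, he1, he2, he3]
  linear_combination (-(2 * c 2 τ + 6 * c 3 τ * wpP τ z) * sigA τ z) * hR

/-- Coefficients of `φ_{0,3}` as a cubic in `wpP`, from the Weierstrass equation. -/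
def Q0 : Fin 4 → ℂ → ℂ :=
  ![fun τ => Eis6 τ / 216, fun τ => -Eis4 τ / 12, fun _ => 0, fun _ => 4]

/-- Coefficients of `H_0 φ_{0,3}` as a cubic in `wpP`. -/
def Q1 : Fin 4 → ℂ → ℂ :=
  ![fun τ => -Eis4 τ ^ 2 / 288, fun τ => Eis6 τ / 12, fun τ => -Eis4 τ / 2, fun _ => 0]

/-- Coefficients of `H_2 H_0 φ_{0,3}` as a cubic in `wpP`. -/
def Q2 : Fin 4 → ℂ → ℂ :=
  ![fun τ => 7 / 864 * (Eis4 τ * Eis6 τ), fun τ => -3 / 16 * Eis4 τ ^ 2, Eis6, Eis4]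

/-- Coefficients of `H_4 H_2 H_0 φ_{0,3}` as a cubic in `wpP`. -/
def Q3 : Fin 4 → ℂ → ℂ :=
  ![fun τ => 7 / 1152 * Eis4 τ ^ 3 - Eis6 τ ^ 2 / 24, fun τ => 13 / 16 * (Eis4 τ * Eis6 τ),
    fun τ => -33 / 8 * Eis4 τ ^ 2, fun τ => -6 * Eis6 τ]

/-- Coefficients of `H_6 H_4 H_2 H_0 φ_{0,3}` as a cubic in `wpP`. -/
def Q4 : Fin 4 → ℂ → ℂ :=
  ![fun τ => 263 / 1152 * (Eis4 τ ^ 2 * Eis6 τ),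
    fun τ => -11 / 6 * Eis6 τ ^ 2 - 641 / 192 * Eis4 τ ^ 3,
    fun τ => 51 / 2 * (Eis4 τ * Eis6 τ), fun τ => 177 / 4 * Eis4 τ ^ 2]

/-- `q dE₄/dq`. -/
def dE4 (τ : ℂ) : ℂ := (Eis2 τ * Eis4 τ - Eis6 τ) / 3

/-- `q dE₆/dq`. -/
def dE6 (τ : ℂ) : ℂ := (Eis2 τ * Eis6 τ - Eis4 τ ^ 2) / 2

lemma heatMod_Q0 {τ z : ℂ} (hτ : 0 < τ.im) (h : th 0 τ z ≠ 0) :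
    heatMod 3 0 (cubicA Q0) τ z = cubicA Q1 τ z := by
  refine heatMod_cubicA 0 (d := ![fun τ => dE6 τ / 216, fun τ => -dE4 τ / 12, fun _ => 0,
    fun _ => 0]) ?_ ?_ ?_ ?_ ?_ hτ h
  · intro i τ hτ
    have h4 := hasDerivAt_Eis4 hτ
    have h6 := hasDerivAt_Eis6 hτ
    fin_cases i
    · exact (h6.div_const 216).congr_deriv (by simp [dE6]; ring)
    · exact (h4.fun_neg.div_const 12).congr_deriv (by simp [dE4]; ring)
    · exact (hasDerivAt_const τ _).congr_deriv (by simp)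
    · exact (hasDerivAt_const τ _).congr_deriv (by simp)
  all_goals intro τ; simp [Q0, Q1, dE4, dE6]; try ring

lemma heatMod_Q1 {τ z : ℂ} (hτ : 0 < τ.im) (h : th 0 τ z ≠ 0) :
    heatMod 3 2 (cubicA Q1) τ z = cubicA Q2 τ z := by
  refine heatMod_cubicA 2 (d := ![fun τ => -Eis4 τ * dE4 τ / 144, fun τ => dE6 τ / 12,
    fun τ => -dE4 τ / 2, fun _ => 0]) ?_ ?_ ?_ ?_ ?_ hτ h
  · intro i τ hτ
    have h4 := hasDerivAt_Eis4 hτ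
    have h6 := hasDerivAt_Eis6 hτ
    fin_cases i
    · exact ((h4.fun_pow 2).fun_neg.div_const 288).congr_deriv (by simp [dE4]; ring)
    · exact (h6.div_const 12).congr_deriv (by simp [dE6]; ring)
    · exact (h4.fun_neg.div_const 2).congr_deriv (by simp [dE4]; ring)
    · exact (hasDerivAt_const τ _).congr_deriv (by simp)
  all_goals intro τ; simp [Q1, Q2, dE4, dE6]; try ring

lemma heatMod_Q2 {τ z : ℂ} (hτ : 0 < τ.im) (h : th 0 τ z ≠ 0) :
    heatMod 3 4 (cubicA Q2) τ z = cubicA Q3 τ z := by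
  refine heatMod_cubicA 4 (d := ![fun τ => 7 / 864 * (dE4 τ * Eis6 τ + Eis4 τ * dE6 τ),
    fun τ => -3 / 8 * Eis4 τ * dE4 τ, dE6, dE4]) ?_ ?_ ?_ ?_ ?_ hτ h
  · intro i τ hτ
    have h4 := hasDerivAt_Eis4 hτ
    have h6 := hasDerivAt_Eis6 hτ
    fin_cases i
    · exact ((h4.fun_mul h6).const_mul (7 / 864)).congr_deriv (by simp [dE4, dE6]; ring)
    · exact ((h4.fun_pow 2).const_mul (-3 / 16)).congr_deriv (by simp [dE4]; ring)
    · exact h6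
    · exact h4
  all_goals intro τ; simp [Q2, Q3, dE4, dE6]; try ring

lemma heatMod_Q3 {τ z : ℂ} (hτ : 0 < τ.im) (h : th 0 τ z ≠ 0) :
    heatMod 3 6 (cubicA Q3) τ z = cubicA Q4 τ z := by
  refine heatMod_cubicA 6 (d := ![fun τ => 7 / 384 * Eis4 τ ^ 2 * dE4 τ - Eis6 τ * dE6 τ / 12,
    fun τ => 13 / 16 * (dE4 τ * Eis6 τ + Eis4 τ * dE6 τ),
    fun τ => -33 / 4 * Eis4 τ * dE4 τ, fun τ => -6 * dE6 τ]) ?_ ?_ ?_ ?_ ?_ hτ h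
  · intro i τ hτ
    have h4 := hasDerivAt_Eis4 hτ
    have h6 := hasDerivAt_Eis6 hτ
    fin_cases i
    · exact (((h4.fun_pow 3).const_mul (7 / 1152)).fun_sub
        ((h6.fun_pow 2).div_const 24)).congr_deriv (by simp [dE4, dE6]; ring)
    · exact ((h4.fun_mul h6).const_mul (13 / 16)).congr_deriv (by simp [dE4, dE6]; ring)
    · exact ((h4.fun_pow 2).const_mul (-33 / 8)).congr_deriv (by simp [dE4]; ring)
    · exact (h6.const_mul (-6)).congr_deriv (by simp [dE6]; ring)
  all_goals intro τ; simp [Q3, Q4, dE4, dE6]; try ring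

end Heat

/-- degree-4 modular differential equation for `φ_{0,3}`:
`H^{(3)}_{6}H^{(3)}_{4}H^{(3)}_{2}H^{(3)}_{0}(φ_{0,3}) − (29/2)·E₄·H^{(3)}_{2}H^{(3)}_{0}(φ_{0,3})
 + 22·E₆·H^{(3)}_{0}(φ_{0,3}) − (119/16)·E₄²·φ_{0,3} = 0` where `ϑ(τ,z) ≠ 0`. -/
theorem statement17 (τ z : ℂ) (hτ : 0 < τ.im) (hθ : thetaJ τ z ≠ 0) :
    heatMod 3 6 (heatMod 3 4 (heatMod 3 2 (heatMod 3 0 phi03))) τ z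
      - (29/2) * Eis4 τ * heatMod 3 2 (heatMod 3 0 phi03) τ z
      + 22 * Eis6 τ * heatMod 3 0 phi03 τ z
      - (119/16) * Eis4 τ ^ 2 * phi03 τ z = 0 := by
  rw [thetaJ_eq_th] at hθ
  have h0 : ∀ τ z : ℂ, 0 < τ.im → th 0 τ z ≠ 0 → phi03 τ z = cubicA Q0 τ z := by
    intro τ z hτ h
    rw [phi03_eq hτ h, wpR_sq hτ h]
    simp only [cubicA, Q0, Matrix.cons_val]
    ring
  have h1 : ∀ τ z : ℂ, 0 < τ.im → th 0 τ z ≠ 0 → heatMod 3 0 phi03 τ z = cubicA Q1 τ z :=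
    fun τ z hτ h => (heatMod_congr 3 0 h0 hτ h).trans (heatMod_Q0 hτ h)
  have h2 : ∀ τ z : ℂ, 0 < τ.im → th 0 τ z ≠ 0 →
      heatMod 3 2 (heatMod 3 0 phi03) τ z = cubicA Q2 τ z :=
    fun τ z hτ h => (heatMod_congr 3 2 h1 hτ h).trans (heatMod_Q1 hτ h)
  have h3 : ∀ τ z : ℂ, 0 < τ.im → th 0 τ z ≠ 0 →
      heatMod 3 4 (heatMod 3 2 (heatMod 3 0 phi03)) τ z = cubicA Q3 τ z :=
    fun τ z hτ h => (heatMod_congr 3 4 h2 hτ h).trans (heatMod_Q2 hτ h)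
  rw [h0 τ z hτ hθ, h1 τ z hτ hθ, h2 τ z hτ hθ,
    (heatMod_congr 3 6 h3 hτ hθ).trans (heatMod_Q3 hτ hθ)]
  simp only [cubicA, Q0, Q1, Q2, Q4, Matrix.cons_val]
  ring
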